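/- Let G be a finite simple graph on n vertices with at least one edge. Then R/I(G) is Cohen–Macaulay (i.e. depth(R/I(G)) equals the Krull dimension of R/I(G)) if and only if v(J(G)) = pd_R(R/I(G)) − 1 = α₀(G) − 1, where α₀(G) is the minimum cardinality of a vertex cover of G. (By Terai's formula, pd_R(R/I(G)) − 1 = reg(R/J(G)).) -/

import Mathlib

open MvPolynomial CategoryTheory

noncomputable section

/-- A set of vertices is a vertex cover if it meets every edge. -/
def IsVertexCover {V : Type} (G : SimpleGraph V) (C : Set V) : Prop :=
  ∀ ⦃u v : V⦄, G.Adj u v → u ∈ C ∨ v ∈ C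

/-- A vertex cover minimal with respect to inclusion. -/
def IsMinimalVertexCover {V : Type} (G : SimpleGraph V) (C : Set V) : Prop :=
  IsVertexCover G C ∧ ∀ C' ⊆ C, IsVertexCover G C' → C' = C

/-- `α₀(G)`: the minimum cardinality of a vertex cover of `G`. -/
def coverNumber {V : Type} (G : SimpleGraph V) : ℕ :=
  sInf {k | ∃ C : Set V, IsVertexCover G C ∧ C.ncard = k}

/-- `bight(I(G))`: the maximum cardinality of a minimal vertex cover of `G`. -/
def bigHeight {V : Type} (G : SimpleGraph V) : ℕ :=
  sSup {k | ∃ C : Set V, IsMinimalVertexCover G C ∧ C.ncard = k}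

/-- The edge ideal `I(G) ⊆ K[x_v : v ∈ V]`, generated by the monomials
`x_u * x_v` over the edges `{u,v}` of `G`. -/
def edgeIdeal (K : Type) [Field K] {V : Type} (G : SimpleGraph V) :
    Ideal (MvPolynomial V K) :=
  Ideal.span {m | ∃ u v : V, G.Adj u v ∧ m = X u * X v}

/-- The cover ideal `J(G) = ⋂_{{u,v} ∈ E(G)} ⟨x_u, x_v⟩`. -/
def coverIdeal (K : Type) [Field K] {V : Type} (G : SimpleGraph V) :
    Ideal (MvPolynomial V K) :=
  ⨅ (u : V) (v : V) (_ : G.Adj u v), Ideal.span {X u, X v}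

/-- The v-number of a graded ideal `I`: the least `d ≥ 0` such that there is a
homogeneous polynomial `f` of degree `d` with `I : f` a prime ideal. -/
def vNumber {K : Type} [Field K] {V : Type} (I : Ideal (MvPolynomial V K)) : ℕ :=
  sInf {d | ∃ f : MvPolynomial V K, f.IsHomogeneous d ∧
    (I.colon (Ideal.span {f})).IsPrime}

/-- The homogeneous maximal ideal `⟨x_1, …, x_n⟩` of the polynomial ring. -/
def maxIdeal (K : Type) [Field K] (V : Type) : Ideal (MvPolynomial V K) :=
  Ideal.span (Set.range (X : V → MvPolynomial V K))

/-- The depth of the module `M` with respect to the ideal `J`: the supremum of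
the lengths of regular sequences on `M` consisting of elements of `J`. -/
def mdepth {R : Type} [CommRing R] (J : Ideal R) (M : Type) [AddCommGroup M]
    [Module R M] : ℕ :=
  sSup {k | ∃ rs : List R, rs.length = k ∧ (∀ r ∈ rs, r ∈ J) ∧
    RingTheory.Sequence.IsRegular M rs}

/-- The projective dimension of an `R`-module `M`, characterized by the
vanishing of `Ext^i(M, N)` for all `i > d` and all modules `N`. -/
def projDim (R : Type) [CommRing R] (M : ModuleCat.{0} R) : ℕ :=
  sInf {d : ℕ | ∀ (N : ModuleCat.{0} R) (i : ℕ), d < i →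
    Subsingleton (((Ext R (ModuleCat.{0} R) i).obj (Opposite.op M)).obj N)}

/-- `M_p` has projective dimension `< d`. -/
def PDLT {R : Type} [CommRing R] (p : Ideal R) [p.IsPrime] (M : Type) [AddCommGroup M] [Module R M]
    (d : ℕ) : Prop :=
  HasProjectiveDimensionLT ((ModuleCat.of R M).localizedModule p.primeCompl) d

section PD
variable {R : Type} [CommRing R] (p : Ideal R) [p.IsPrime]
  {M : Type} [AddCommGroup M] [Module R M]
  {N : Type} [AddCommGroup N] [Module R N]
  {L : Type} [AddCommGroup L] [Module R L]

lemma PDLT.mono {d e : ℕ} (h : PDLT p M d) (hde : d ≤ e) : PDLT p M e := by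
  unfold PDLT at *
  exact hasProjectiveDimensionLT_of_ge _ d e hde

lemma PDLT.congr (e : M ≃ₗ[R] N) {d : ℕ} : PDLT p M d ↔ PDLT p N d := by
  unfold PDLT
  have i : (ModuleCat.of R M).localizedModule p.primeCompl ≅
    (ModuleCat.of R N).localizedModule p.primeCompl :=
    (ModuleCat.localizedModuleFunctor p.primeCompl).mapIso e.toModuleIso
  exact ⟨fun h => hasProjectiveDimensionLT_of_iso i _, fun h => hasProjectiveDimensionLT_of_iso i.symm _⟩

/-- A short complex of modules from exact linear maps. -/
lemma exists_ses (f : M →ₗ[R] N) (g : N →ₗ[R] L) (hf : Function.Injective f)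
    (hg : Function.Surjective g) (hfg : Function.Exact f g) :
    ∃ S : ShortComplex (ModuleCat.{0} R), S.ShortExact ∧ S.X₁ = ModuleCat.of R M ∧
      S.X₂ = ModuleCat.of R N ∧ S.X₃ = ModuleCat.of R L := by
  refine ⟨ShortComplex.mk (ModuleCat.ofHom f) (ModuleCat.ofHom g) ?_, ?_, rfl, rfl, rfl⟩
  · ext x
    exact hfg.apply_apply_eq_zero x
  · refine ShortComplex.ShortExact.mk' ?_ ?_ ?_
    · rw [ShortComplex.ShortExact.moduleCat_exact_iff_function_exact]
      exact hfg
    · exact (ModuleCat.mono_iff_injective _).mpr hf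
    · exact (ModuleCat.epi_iff_surjective _).mpr hg

lemma exists_ses_loc (f : M →ₗ[R] N) (g : N →ₗ[R] L) (hf : Function.Injective f)
    (hg : Function.Surjective g) (hfg : Function.Exact f g) :
    ∃ S : ShortComplex (ModuleCat.{0} (Localization p.primeCompl)), S.ShortExact ∧
      S.X₁ = (ModuleCat.of R M).localizedModule p.primeCompl ∧
      S.X₂ = (ModuleCat.of R N).localizedModule p.primeCompl ∧
      S.X₃ = (ModuleCat.of R L).localizedModule p.primeCompl := by
  obtain ⟨S, hS, h1, h2, h3⟩ := exists_ses f g hf hg hfg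
  refine ⟨S.map (ModuleCat.localizedModuleFunctor p.primeCompl), hS.map_of_exact _, ?_, ?_, ?_⟩
  · rw [← h1]; rfl
  · rw [← h2]; rfl
  · rw [← h3]; rfl

lemma PDLT.X₁ (f : M →ₗ[R] N) (g : N →ₗ[R] L) (hf : Function.Injective f)
    (hg : Function.Surjective g) (hfg : Function.Exact f g) {d : ℕ}
    (h2 : PDLT p N d) (h3 : PDLT p L (d + 1)) : PDLT p M d := by
  obtain ⟨S, hS, e1, e2, e3⟩ := exists_ses_loc p f g hf hg hfg
  unfold PDLT at *
  rw [← e1]; rw [← e2] at h2; rw [← e3] at h3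
  exact hS.hasProjectiveDimensionLT_X₁ d h2 h3

lemma PDLT.X₂ (f : M →ₗ[R] N) (g : N →ₗ[R] L) (hf : Function.Injective f)
    (hg : Function.Surjective g) (hfg : Function.Exact f g) {d : ℕ}
    (h1 : PDLT p M d) (h3 : PDLT p L d) : PDLT p N d := by
  obtain ⟨S, hS, e1, e2, e3⟩ := exists_ses_loc p f g hf hg hfg
  unfold PDLT at *
  rw [← e2]; rw [← e1] at h1; rw [← e3] at h3
  exact hS.hasProjectiveDimensionLT_X₂ d h1 h3

lemma PDLT.X₃ (f : M →ₗ[R] N) (g : N →ₗ[R] L) (hf : Function.Injective f)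
    (hg : Function.Surjective g) (hfg : Function.Exact f g) {d : ℕ}
    (h1 : PDLT p M d) (h2 : PDLT p N (d + 1)) : PDLT p L (d + 1) := by
  obtain ⟨S, hS, e1, e2, e3⟩ := exists_ses_loc p f g hf hg hfg
  unfold PDLT at *
  rw [← e3]; rw [← e1] at h1; rw [← e2] at h2
  exact hS.hasProjectiveDimensionLT_X₃ d h1 h2

lemma PDLT.of_global {d : ℕ} (h : HasProjectiveDimensionLT (ModuleCat.of R M) (d + 1)) :
    PDLT p M (d + 1) :=
  haveI : HasProjectiveDimensionLE (ModuleCat.of R M) d := h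
  ModuleCat.localizedModule_hasProjectiveDimensionLE d p.primeCompl _

lemma PDLT.zero_iff : PDLT p M 0 ↔ Subsingleton (LocalizedModule p.primeCompl M) := by
  unfold PDLT
  rw [hasProjectiveDimensionLT_zero_iff_isZero, ModuleCat.isZero_iff_subsingleton]
  exact (equivShrink _).symm.subsingleton_congr

/-- The linear equivalence between `ModuleCat.localizedModule` and `LocalizedModule`. -/
def locEquiv : ((ModuleCat.of R M).localizedModule p.primeCompl) ≃ₗ[Localization p.primeCompl]
    LocalizedModule p.primeCompl M :=
  Shrink.linearEquiv (Localization p.primeCompl) _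

lemma PDLT.one_iff : PDLT p M 1 ↔
    Module.Projective (Localization p.primeCompl) (LocalizedModule p.primeCompl M) := by
  unfold PDLT
  rw [← projective_iff_hasProjectiveDimensionLT_one, ← IsProjective.iff_projective]
  exact ⟨fun h => Module.Projective.of_equiv (locEquiv p), fun h => Module.Projective.of_equiv (locEquiv p).symm⟩

lemma PDLT.zero_of_smul (s : R) (hs : s ∉ p) (h : ∀ x : M, s • x = 0) : PDLT p M 0 := by
  rw [PDLT.zero_iff]
  rw [LocalizedModule.subsingleton_iff]
  exact fun m => ⟨s, hs, h m⟩

end PD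

section PD2
open scoped Pointwise
set_option linter.unusedSectionVars false
variable {R : Type} [CommRing R] [IsNoetherianRing R] (p : Ideal R) [p.IsPrime]
  {M : Type} [AddCommGroup M] [Module R M] [Module.Finite R M]

/-- Localization commutes with quotient by an element. -/
lemma quotSMulTop_loc_equiv (S : Submonoid R) (x : R) :
    Nonempty (QuotSMulTop (algebraMap R (Localization S) x) (LocalizedModule S M) ≃ₗ[Localization S]
      LocalizedModule S (QuotSMulTop x M)) := by
  let q : M →ₗ[R] QuotSMulTop x M := (x • (⊤ : Submodule R M)).mkQ
  let g := LocalizedModule.map S q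
  have hg : ∀ y, g y = IsLocalizedModule.map S (LocalizedModule.mkLinearMap S M)
    (LocalizedModule.mkLinearMap S _) q y := fun y => rfl
  have hsurj : Function.Surjective g := by
    intro y
    obtain ⟨z, hz⟩ := IsLocalizedModule.map_surjective S (LocalizedModule.mkLinearMap S M)
      (LocalizedModule.mkLinearMap S _) q (Submodule.mkQ_surjective _) y
    exact ⟨z, hz⟩
  have hex := LocalizedModule.map_exact S _ _ (LinearMap.exact_lsmul_mkQ_smul_top M x)
  have hker : LinearMap.ker g = (algebraMap R (Localization S) x) •
      (⊤ : Submodule (Localization S) (LocalizedModule S M)) := by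
    ext y
    rw [LinearMap.mem_ker, Submodule.mem_smul_pointwise_iff_exists]
    refine (hex y).trans ?_
    constructor
    · rintro ⟨z, hz⟩
      refine ⟨z, trivial, ?_⟩
      rw [← hz]
      induction z using LocalizedModule.induction_on with
      | h m s =>
        simp [LocalizedModule.smul'_mk, IsLocalizedModule.map_LocalizedModules]
    · rintro ⟨z, -, hz⟩
      refine ⟨z, ?_⟩
      rw [← hz]
      induction z using LocalizedModule.induction_on with
      | h m s =>
        simp [LocalizedModule.smul'_mk, IsLocalizedModule.map_LocalizedModules]
  exact ⟨(Submodule.quotEquivOfEq _ _ hker.symm).trans (g.quotKerEquivOfSurjective hsurj)⟩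

lemma regular_loc (S : Submonoid R) (x : R) (hx : IsSMulRegular M x) :
    IsSMulRegular (LocalizedModule S M) (algebraMap R (Localization S) x) := by
  intro y z h
  have := IsLocalizedModule.map_injective S (LocalizedModule.mkLinearMap S M)
      (LocalizedModule.mkLinearMap S M) (LinearMap.lsmul R M x) hx
  apply this
  have key : ∀ w : LocalizedModule S M, IsLocalizedModule.map S (LocalizedModule.mkLinearMap S M)
      (LocalizedModule.mkLinearMap S M) (LinearMap.lsmul R M x) w =
      algebraMap R (Localization S) x • w := by
    intro w
    induction w using LocalizedModule.induction_on with
      | h m s =>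
        simp [LocalizedModule.smul'_mk, IsLocalizedModule.map_LocalizedModules]
  rw [key, key]; exact h

lemma PDLT.quot_iff (x : R) (hxp : x ∈ p) (hx : IsSMulRegular M x) {d : ℕ} :
    PDLT p (QuotSMulTop x M) (d + 1) ↔ PDLT p M d := by
  let A := Localization p.primeCompl
  have : IsLocalRing A := inferInstanceAs (IsLocalRing (Localization.AtPrime p))
  have : IsNoetherianRing A := IsLocalization.isNoetherianRing p.primeCompl A ‹_›
  have hfin : Module.Finite A (LocalizedModule p.primeCompl M) := inferInstance
  have hmem : algebraMap R A x ∈ IsLocalRing.maximalIdeal A := by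
    have := (IsLocalization.AtPrime.to_map_mem_maximal_iff (Localization.AtPrime p) p x).mpr hxp
    exact this
  have h := ModuleCat.projectiveDimension_quotSMulTop_eq_succ_of_isSMulRegular
    (ModuleCat.of A (LocalizedModule p.primeCompl M)) (algebraMap R A x) (regular_loc _ x hx) hmem
  obtain ⟨e⟩ := quotSMulTop_loc_equiv (M := M) p.primeCompl x
  have i1 := projectiveDimension_eq_of_iso (e.trans (locEquiv p).symm).toModuleIso
  have i2 := projectiveDimension_eq_of_iso (locEquiv (M := M) p).symm.toModuleIso
  unfold PDLT
  rw [← projectiveDimension_lt_iff, ← projectiveDimension_lt_iff]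
  change projectiveDimension (ModuleCat.of A ((ModuleCat.of R (QuotSMulTop x M)).localizedModule p.primeCompl)) < _ ↔
    projectiveDimension (ModuleCat.of A ((ModuleCat.of R M).localizedModule p.primeCompl)) < _
  rw [← i1, ← i2]
  have h' : projectiveDimension (ModuleCat.of A (QuotSMulTop ((algebraMap R A) x) (LocalizedModule p.primeCompl M)))
    = projectiveDimension (ModuleCat.of A (LocalizedModule p.primeCompl M)) + 1 := h
  rw [h']
  generalize projectiveDimension (ModuleCat.of A (LocalizedModule p.primeCompl M)) = D
  push_cast
  induction D with
  | bot => simp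
  | coe D =>
    induction D with
    | top =>
      simp
      exact add_le_add le_top le_rfl
    | coe D => norm_cast; omega

/-- If the residue field has finite projective dimension, it bounds the global dimension. -/
lemma PDLT.of_residue {D : ℕ} (hD : PDLT p (R ⧸ p) (D + 1)) : PDLT p M (D + 1) := by
  have prime_case : ∀ P : Ideal R, P.IsPrime → PDLT p (R ⧸ P) (D + 1) := by
    intro P
    induction P using WellFoundedGT.induction with
    | ind P ih =>
      intro hP
      by_cases hle : P ≤ p
      · rcases hle.eq_or_lt with h | h
        · subst h; exact hD
        · obtain ⟨x, hxp, hxP⟩ := Set.exists_of_ssubset h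
          have hreg : IsSMulRegular (R ⧸ P) x := by
            rw [isSMulRegular_quotient_iff_mem_of_smul_mem]
            intro y hy
            exact (hP.mem_or_mem hy).resolve_left hxP
          refine PDLT.mono p ((PDLT.quot_iff p x hxp hreg).mp ?_) (Nat.le_succ D)
          have hkill : ∀ a ∈ P ⊔ Ideal.span {x}, ∀ m : QuotSMulTop x (R ⧸ P), a • m = 0 := by
            have : P ⊔ Ideal.span {x} ≤ Module.annihilator R (QuotSMulTop x (R ⧸ P)) := by
              apply sup_le
              · intro a ha
                rw [Module.mem_annihilator]
                intro m
                obtain ⟨m, rfl⟩ := Submodule.mkQ_surjective _ m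
                obtain ⟨m, rfl⟩ := Ideal.Quotient.mk_surjective m
                rw [← map_smul]
                have : a • (Ideal.Quotient.mk P m) = 0 := by
                  change Ideal.Quotient.mk P (a * m) = 0
                  exact Ideal.Quotient.eq_zero_iff_mem.mpr (P.mul_mem_right _ ha)
                rw [this, map_zero]
              · rw [Ideal.span_singleton_le_iff_mem]
                exact QuotSMulTop.mem_annihilator _ x
            intro a ha
            exact Module.mem_annihilator.mp (this ha)
          revert hkill
          have main : ∀ (Q : Type) [AddCommGroup Q] [Module R Q] [Module.Finite R Q],
            (∀ a ∈ P ⊔ Ideal.span {x}, ∀ m : Q, a • m = 0) → PDLT p Q (D + 1) := by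
            intro Q _ _ hfin
            induction hfin using IsNoetherianRing.induction_on_isQuotientEquivQuotientPrime with
            | subsingleton N =>
              intro _
              exact PDLT.mono p (PDLT.zero_of_smul p 1 (fun h => (Ideal.ne_top_iff_one p).mp Ideal.IsPrime.ne_top' h)
                (fun x => Subsingleton.elim _ _)) (Nat.zero_le _)
            | quotient N q e =>
              intro hk
              rw [PDLT.congr p e]
              apply ih q.1 _ q.2
              have hle : P ⊔ Ideal.span {x} ≤ q.1 := by
                intro a ha
                have h1 := hk a ha (e.symm (Ideal.Quotient.mk q.1 1))
                rw [← map_smul, LinearEquiv.map_eq_zero_iff] at h1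
                have h2 : Ideal.Quotient.mk q.1 (a * 1) = 0 := h1
                rw [Ideal.Quotient.eq_zero_iff_mem, mul_one] at h2
                exact h2
              refine lt_of_le_of_ne (le_sup_left.trans hle) ?_
              intro heq
              apply hxP
              have hx1 := hle (Ideal.mem_sup_right (Ideal.mem_span_singleton_self x))
              rw [← heq] at hx1
              exact hx1
            | exact N₁ N₂ N₃ f g hf hg hfg h1 h3 =>
              intro hk
              refine PDLT.X₂ p f g hf hg hfg (h1 ?_) (h3 ?_)
              · intro a ha m
                apply hf
                rw [map_smul, hk a ha, map_zero]
              · intro a ha m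
                obtain ⟨m, rfl⟩ := hg m
                rw [← map_smul, hk a ha, map_zero]
          exact main _
      · obtain ⟨s, hs, hsp⟩ := Set.not_subset.mp hle
        refine PDLT.mono p (PDLT.zero_of_smul p s hsp ?_) (Nat.zero_le _)
        intro m
        obtain ⟨m, rfl⟩ := Ideal.Quotient.mk_surjective m
        change Ideal.Quotient.mk P (s * m) = 0
        exact Ideal.Quotient.eq_zero_iff_mem.mpr (P.mul_mem_right _ hs)
  have hfin : Module.Finite R M := inferInstance
  induction hfin using IsNoetherianRing.induction_on_isQuotientEquivQuotientPrime with
  | subsingleton N =>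
    exact PDLT.mono p (PDLT.zero_of_smul p 1 (fun h => (Ideal.ne_top_iff_one p).mp Ideal.IsPrime.ne_top' h)
      (fun x => Subsingleton.elim _ _)) (Nat.zero_le _)
  | quotient N q e =>
    rw [PDLT.congr p e]
    exact prime_case _ q.2
  | exact N₁ N₂ N₃ f g hf hg hfg h1 h3 => exact PDLT.X₂ p f g hf hg hfg h1 h3

end PD2

section PSsec
open scoped Pointwise
variable (K : Type) [Field K] {n : ℕ}

/-- The prime ideal generated by the variables in `S`. -/
def PS (S : Finset (Fin n)) : Ideal (MvPolynomial (Fin n) K) :=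
  Ideal.span (X '' (S : Set (Fin n)))

/-- Killing the variables in `S`. -/
def phiS (S : Finset (Fin n)) : MvPolynomial (Fin n) K →ₐ[K] MvPolynomial {v // v ∉ S} K :=
  aeval (fun v => if h : v ∈ S then 0 else X ⟨v, h⟩)

lemma phiS_surjective (S : Finset (Fin n)) : Function.Surjective (phiS K S) := by
  intro f
  refine ⟨rename Subtype.val f, ?_⟩
  have : (phiS K S).comp (rename Subtype.val) = AlgHom.id K _ := by
    ext v : 1
    simp [phiS, v.2]
  exact DFunLike.congr_fun this f

lemma ker_phiS (S : Finset (Fin n)) : RingHom.ker (phiS K S) = PS K S := by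
  apply le_antisymm
  · intro f hf
    have h : ((Ideal.Quotient.mkₐ K (PS K S)).comp (rename Subtype.val)).comp (phiS K S) =
        Ideal.Quotient.mkₐ K (PS K S) := by
      ext v
      by_cases hv : v ∈ S
      · simp only [phiS, AlgHom.comp_apply, aeval_X, hv, dite_true, map_zero]
        symm
        exact Ideal.Quotient.eq_zero_iff_mem.mpr (Ideal.subset_span ⟨v, hv, rfl⟩)
      · simp [phiS, hv]
    have h2 := DFunLike.congr_fun h f
    rw [AlgHom.comp_apply, RingHom.mem_ker.mp hf, map_zero] at h2
    exact Ideal.Quotient.eq_zero_iff_mem.mp h2.symm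
  · refine Ideal.span_le.mpr ?_
    rintro _ ⟨v, hv, rfl⟩
    have hv' : v ∈ S := hv
    simp [RingHom.mem_ker, phiS, hv']

instance PS_prime (S : Finset (Fin n)) : (PS K S).IsPrime := by
  rw [← ker_phiS]; exact RingHom.ker_isPrime _

lemma mem_PS {S : Finset (Fin n)} {f : MvPolynomial (Fin n) K} :
    f ∈ PS K S ↔ ∀ m ∈ f.support, ∃ i ∈ S, m i ≠ 0 := mem_ideal_span_X_image

lemma X_mem_PS {S : Finset (Fin n)} {v : Fin n} : (X v : MvPolynomial (Fin n) K) ∈ PS K S ↔ v ∈ S := by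
  rw [mem_PS]
  classical
  simp [support_X, Finsupp.single_apply]

lemma PS_le_iff {S : Finset (Fin n)} {J : Ideal (MvPolynomial (Fin n) K)} :
    PS K S ≤ J ↔ ∀ v ∈ S, X v ∈ J := by
  rw [PS, Ideal.span_le]
  constructor
  · intro h v hv; exact h ⟨v, hv, rfl⟩
  · rintro h _ ⟨v, hv, rfl⟩; exact h v hv

lemma PS_mono {S T : Finset (Fin n)} : PS K S ≤ PS K T ↔ S ⊆ T := by
  rw [PS_le_iff]
  simp only [X_mem_PS]; rfl

lemma dim_PS (S : Finset (Fin n)) :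
    ringKrullDim (MvPolynomial (Fin n) K ⧸ PS K S) = ((n - S.card : ℕ) : WithBot ℕ∞) := by
  have e := Ideal.quotientKerAlgEquivOfSurjective (phiS_surjective K S)
  have e2 := (Ideal.quotEquivOfEq (ker_phiS K S).symm).trans e.toRingEquiv
  rw [ringKrullDim_eq_of_ringEquiv e2, MvPolynomial.ringKrullDim_of_isNoetherianRing,
    ringKrullDim_eq_zero_of_field]
  simp [Nat.card_eq_fintype_card, Fintype.card_subtype_compl]

/-- regular elements modulo a prime -/
lemma regular_of_not_mem {R : Type} [CommRing R] (P : Ideal R) [hP : P.IsPrime] {x : R} (hx : x ∉ P) :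
    IsSMulRegular (R ⧸ P) x := by
  rw [isSMulRegular_quotient_iff_mem_of_smul_mem]
  intro y hy
  exact (hP.mem_or_mem hy).resolve_left hx

/-- `(R/P)/x = R/(P+x)`. -/
lemma quot_quot_equiv {R : Type} [CommRing R] (P : Ideal R) (x : R) :
    Nonempty (QuotSMulTop x (R ⧸ P) ≃ₗ[R] (R ⧸ (P ⊔ Ideal.span {x}))) := by
  let q : (R ⧸ P) →ₗ[R] (R ⧸ (P ⊔ Ideal.span {x})) := Submodule.factor le_sup_left
  have hq : ∀ y, q (Submodule.Quotient.mk y) = Submodule.Quotient.mk y := fun y => rfl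
  have hsurj : Function.Surjective q := by
    intro y
    obtain ⟨y, rfl⟩ := Submodule.Quotient.mk_surjective _ y
    exact ⟨_, hq y⟩
  have hker : LinearMap.ker q = x • (⊤ : Submodule R (R ⧸ P)) := by
    ext y
    obtain ⟨y, rfl⟩ := Submodule.Quotient.mk_surjective _ y
    rw [LinearMap.mem_ker, hq, Submodule.Quotient.mk_eq_zero, Submodule.mem_smul_pointwise_iff_exists]
    constructor
    · intro h
      obtain ⟨a, ha, b, hb, rfl⟩ := Submodule.mem_sup.mp h
      obtain ⟨c, rfl⟩ := Ideal.mem_span_singleton'.mp hb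
      refine ⟨Submodule.Quotient.mk c, trivial, ?_⟩
      rw [← Submodule.Quotient.mk_smul, Submodule.Quotient.eq]
      have : x • c - (a + c * x) = -a := by simp; ring
      rw [this]; exact P.neg_mem ha
    · rintro ⟨z, -, hz⟩
      obtain ⟨z, rfl⟩ := Submodule.Quotient.mk_surjective _ z
      rw [← Submodule.Quotient.mk_smul, Submodule.Quotient.eq] at hz
      have : y = -(x • z - y) + z * x := by simp; ring
      rw [this]
      exact add_mem (Ideal.mem_sup_left (P.neg_mem hz))
        (Ideal.mem_sup_right (Ideal.mul_mem_left _ _ (Ideal.mem_span_singleton_self x)))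
  exact ⟨(Submodule.quotEquivOfEq _ _ hker.symm).trans (q.quotKerEquivOfSurjective hsurj)⟩

lemma PS_insert [DecidableEq (Fin n)] (S : Finset (Fin n)) (v : Fin n) :
    PS K S ⊔ Ideal.span {X v} = PS K (insert v S) := by
  unfold PS
  rw [Finset.coe_insert, Set.image_insert_eq, Ideal.span_insert, sup_comm]

lemma PDLT_PS {S U : Finset (Fin n)} (hSU : S ⊆ U) {d : ℕ} :
    PDLT (PS K U) (MvPolynomial (Fin n) K ⧸ PS K S) d ↔ S.card < d := by
  induction S using Finset.induction_on generalizing d with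
  | empty =>
    have e : (MvPolynomial (Fin n) K ⧸ PS K (∅ : Finset (Fin n))) ≃ₗ[MvPolynomial (Fin n) K]
        MvPolynomial (Fin n) K :=
      Submodule.quotEquivOfEqBot _ (by simp [PS])
    rw [PDLT.congr _ e]
    constructor
    · intro h
      by_contra h'
      have : d = 0 := by simpa using h'
      subst this
      rw [PDLT.zero_iff] at h
      have : Nontrivial (Localization (PS K U).primeCompl) :=
        inferInstanceAs (Nontrivial (Localization.AtPrime (PS K U)))
      exact not_subsingleton (Localization (PS K U).primeCompl) h
    · intro h
      refine PDLT.mono _ (d := 1) ?_ h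
      rw [PDLT.one_iff]
      exact inferInstanceAs (Module.Projective (Localization (PS K U).primeCompl) (Localization (PS K U).primeCompl))
  | insert v S hv ih =>
    have hvU : v ∈ U := hSU (Finset.mem_insert_self _ _)
    obtain ⟨e⟩ := quot_quot_equiv (PS K S) (X v)
    rw [PS_insert] at e
    rw [← PDLT.congr _ e, Finset.card_insert_of_notMem hv]
    have hreg := regular_of_not_mem (PS K S) (x := X v) (by rwa [X_mem_PS])
    have hS := fun d => ih (d := d) ((Finset.subset_insert _ _).trans hSU)
    cases d with
    | zero =>
      simp only [not_lt_zero, iff_false]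
      intro h
      have := (hS 0).mp ((PDLT.quot_iff _ _ ((X_mem_PS K).mpr hvU) hreg).mp (PDLT.mono _ h (Nat.zero_le 1)))
      omega
    | succ d =>
      rw [PDLT.quot_iff _ _ ((X_mem_PS K).mpr hvU) hreg, hS]; omega

lemma PDLT_gl (U : Finset (Fin n)) (M : Type) [AddCommGroup M] [Module (MvPolynomial (Fin n) K) M]
    [Module.Finite (MvPolynomial (Fin n) K) M] : PDLT (PS K U) M (U.card + 1) :=
  PDLT.of_residue _ ((PDLT_PS K (Finset.Subset.refl U)).mpr (Nat.lt_succ_self _))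

end PSsec

section ABsec
open scoped Pointwise
open RingTheory.Sequence

lemma PDLT.seq_iff {R : Type} [CommRing R] [IsNoetherianRing R] (p : Ideal R) [p.IsPrime]
    (rs : List R) (hrs : ∀ r ∈ rs, r ∈ p) :
    ∀ (M : Type) [AddCommGroup M] [Module R M] [Module.Finite R M], IsWeaklyRegular M rs →
    ∀ d, PDLT p (M ⧸ (Ideal.ofList rs • (⊤ : Submodule R M))) (d + rs.length) ↔ PDLT p M d := by
  induction rs with
  | nil =>
    intro M _ _ _ _ d
    have e : (M ⧸ (Ideal.ofList ([] : List R) • (⊤ : Submodule R M))) ≃ₗ[R] M :=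
      Submodule.quotEquivOfEqBot _ (by simp)
    rw [PDLT.congr _ e]; rfl
  | cons r rs ih =>
    intro M _ _ _ h d
    rw [isWeaklyRegular_cons_iff] at h
    rw [PDLT.congr _ (Submodule.quotOfListConsSMulTopEquivQuotSMulTopInner M r rs),
      List.length_cons, show d + (rs.length + 1) = (d + 1) + rs.length by ring,
      ih (fun r hr => hrs r (List.mem_cons_of_mem _ hr)) _ h.2,
      PDLT.quot_iff _ _ (hrs r List.mem_cons_self) h.1]

lemma AB_formula {R : Type} [CommRing R] [IsNoetherianRing R] (p : Ideal R) [hp : p.IsMaximal] (D : ℕ)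
    (h3 : ∀ (M : Type) [AddCommGroup M] [Module R M] [Module.Finite R M], PDLT p M (D + 1))
    (h2 : ∀ d, PDLT p (R ⧸ p) d → D < d)
    (M : Type) [AddCommGroup M] [Module R M] [Module.Finite R M] (hM : ¬ PDLT p M 0)
    (hne : p • (⊤ : Submodule R M) ≠ ⊤) :
    mdepth p M ≤ D ∧ ∀ d, PDLT p M d ↔ D - mdepth p M < d := by
  set Z := {k | ∃ rs : List R, rs.length = k ∧ (∀ r ∈ rs, r ∈ p) ∧ IsRegular M rs} with hZ
  have hnt : ∀ rs : List R, (∀ r ∈ rs, r ∈ p) → IsWeaklyRegular M rs → IsRegular M rs := by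
    intro rs hrs h
    refine ⟨h, fun h' => hne (top_le_iff.mp (h'.le.trans ?_))⟩
    exact Submodule.smul_mono_left (Ideal.span_le.mpr (fun r hr => hrs r hr))
  have hbd : ∀ k ∈ Z, k ≤ D := by
    rintro k ⟨rs, rfl, hrs, hreg⟩
    by_contra hlt
    apply hM
    rw [← PDLT.seq_iff p rs hrs M hreg.1 0]
    exact PDLT.mono p (h3 _) (by omega)
  have hZne : Z.Nonempty := ⟨0, [], rfl, by simp, hnt [] (by simp) (IsWeaklyRegular.nil R M)⟩
  have hmem : mdepth p M ∈ Z := Nat.sSup_mem hZne ⟨D, hbd⟩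
  refine ⟨hbd _ hmem, ?_⟩
  obtain ⟨rs, hlen, hrs, hreg⟩ := hmem
  have hle := hbd (mdepth p M) ⟨rs, hlen, hrs, hreg⟩
  set Q := M ⧸ (Ideal.ofList rs • (⊤ : Submodule R M)) with hQ
  have hQreg : ∀ x ∈ p, ¬ IsSMulRegular Q x := by
    intro x hx hxr
    have : rs.length + 1 ∈ Z := by
      have hall : ∀ r ∈ rs ++ [x], r ∈ p := by
        intro r hr
        rcases List.mem_append.mp hr with h | h
        · exact hrs r h
        · rw [List.mem_singleton.mp h]; exact hx
      refine ⟨rs ++ [x], by simp, hall, hnt _ hall ?_⟩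
      rw [isWeaklyRegular_append_iff]
      exact ⟨hreg.1, (isWeaklyRegular_singleton_iff _ _).mpr hxr⟩
    have h1 : rs.length + 1 ≤ mdepth p M := le_csSup ⟨D, hbd⟩ this
    omega
  have hass : p ∈ associatedPrimes R Q := by
    have hsub : (p : Set R) ⊆ ⋃ P ∈ associatedPrimes R Q, (P : Set R) := by
      rw [biUnion_associatedPrimes_eq_compl_regular]
      intro x hx; exact hQreg x hx
    have hfin : (associatedPrimes R Q).Finite := associatedPrimes.finite R Q
    rw [Ideal.subset_union_prime_finite hfin ⊥ ⊥ (fun i hi _ _ => hi.isPrime)] at hsub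
    obtain ⟨P, hP, hpP⟩ := hsub
    have : p = P := hp.eq_of_le hP.isPrime.ne_top hpP
    rwa [this]
  have hQ2 : ∀ e, PDLT p Q e ↔ D < e := by
    intro e
    constructor
    · intro h
      by_contra hlt
      have h : PDLT p Q D := PDLT.mono p h (by omega)
      obtain ⟨f, hf⟩ := (isAssociatedPrime_iff_exists_injective_linearMap p Q).mp hass |>.2
      have := PDLT.X₁ p f (LinearMap.range f).mkQ hf (Submodule.mkQ_surjective _)
        (LinearMap.exact_map_mkQ_range f) h (h3 _)
      exact lt_irrefl _ (h2 _ this)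
    · intro h; exact PDLT.mono p (h3 _) h
  intro d
  rw [← PDLT.seq_iff p rs hrs M hreg.1 d, hQ2, hlen]
  omega

end ABsec

section ExtBridge

lemma oldExt_iff {R : Type} [CommRing R] {M N : ModuleCat.{0} R} (P : ProjectiveResolution M) (j : ℕ) :
    Subsingleton (((Ext R (ModuleCat.{0} R) (j + 1)).obj (Opposite.op M)).obj N) ↔
    ∀ f : P.complex.X (j + 1) ⟶ N, P.complex.d (j + 2) (j + 1) ≫ f = 0 →
      ∃ g : P.complex.X j ⟶ N, P.complex.d (j + 1) j ≫ g = f := by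
  rw [← ModuleCat.isZero_iff_subsingleton, (P.isoExt (R := R) (j + 1) N).isZero_iff,
    ← HomologicalComplex.exactAt_iff_isZero_homology,
    HomologicalComplex.exactAt_iff' _ j (j + 1) (j + 2) (by simp) (by simp),
    ShortComplex.moduleCat_exact_iff]
  rfl

lemma newExt_iff {R : Type} [CommRing R] {M N : ModuleCat.{0} R} (P : ProjectiveResolution M) (j : ℕ) :
    Subsingleton (Abelian.Ext.{0} M N (j + 1)) ↔
    ∀ f : P.complex.X (j + 1) ⟶ N, P.complex.d (j + 2) (j + 1) ≫ f = 0 →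
      ∃ g : P.complex.X j ⟶ N, P.complex.d (j + 1) j ≫ g = f := by
  constructor
  · intro h f hf
    exact (P.extMk_eq_zero_iff f (j + 2) rfl hf j rfl).mp (Subsingleton.elim _ _)
  · intro h
    refine subsingleton_of_forall_eq 0 fun α => ?_
    obtain ⟨f, hf, rfl⟩ := P.extMk_surjective α (j + 2) rfl
    exact (P.extMk_eq_zero_iff f (j + 2) rfl hf j rfl).mpr (h f hf)

lemma projDim_eq {R : Type} [CommRing R] (M : ModuleCat.{0} R) :
    projDim R M = sInf {d : ℕ | HasProjectiveDimensionLT M (d + 1)} := by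
  unfold projDim
  congr 1
  ext d
  let P := ProjectiveResolution.of M
  constructor
  · intro h
    refine HasProjectiveDimensionLT.mk.{0} fun i hi Y e => ?_
    obtain ⟨j, rfl⟩ : ∃ j, i = j + 1 := ⟨i - 1, by omega⟩
    have := (newExt_iff (N := Y) P j).mpr ((oldExt_iff P j).mp (h Y (j + 1) (by omega)))
    exact Subsingleton.elim _ _
  · intro h N i hi
    obtain ⟨j, rfl⟩ : ∃ j, i = j + 1 := ⟨i - 1, by omega⟩
    have : HasProjectiveDimensionLT M (d + 1) := h
    exact (oldExt_iff P j).mpr ((newExt_iff P j).mp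
      (HasProjectiveDimensionLT.subsingleton.{0} M (d + 1) (j + 1) (by omega) N))

end ExtBridge

section Graded

/-- Minimal generators of a projective module over a local ring are independent. -/
lemma linInd_of_local {A : Type} [CommRing A] [IsLocalRing A] {P : Type} [AddCommGroup P] [Module A P]
    [Module.Projective A P] {l : ℕ} (y : Fin l → P) (hy : Submodule.span A (Set.range y) = ⊤)
    (hrel : ∀ c : Fin l → A, ∑ a, c a • y a = 0 → ∀ a, c a ∈ IsLocalRing.maximalIdeal A) :
    ∀ c : Fin l → A, ∑ a, c a • y a = 0 → c = 0 := by
  let π : (Fin l → A) →ₗ[A] P := Fintype.linearCombination A y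
  have hπ : ∀ c, π c = ∑ a, c a • y a := fun c => Fintype.linearCombination_apply A y c
  have hsurj : Function.Surjective π := by
    rw [← LinearMap.range_eq_top, Fintype.range_linearCombination]; exact hy
  obtain ⟨s, hs⟩ := Module.projective_lifting_property π LinearMap.id hsurj
  have hs' : ∀ z, π (s z) = z := fun z => DFunLike.congr_fun hs z
  let ρ : (Fin l → A) →ₗ[A] (Fin l → A) := LinearMap.id - s ∘ₗ π
  have hρ : ∀ c, ρ c = c - s (π c) := fun c => rfl
  have hρker : ∀ c, ρ c ∈ LinearMap.ker π := by
    intro c; rw [LinearMap.mem_ker, hρ, map_sub, hs', sub_self]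
  have hker : ∀ c ∈ LinearMap.ker π, ρ c = c := by
    intro c hc; rw [hρ, LinearMap.mem_ker.mp hc, map_zero, sub_zero]
  have hrange : LinearMap.ker π = LinearMap.range ρ := by
    apply le_antisymm
    · intro c hc; exact ⟨c, hker c hc⟩
    · rintro _ ⟨c, rfl⟩; exact hρker c
  have hfg : (LinearMap.ker π).FG := by
    rw [hrange]; exact Module.Finite.iff_fg.mp inferInstance
  have hle : LinearMap.ker π ≤ IsLocalRing.maximalIdeal A • LinearMap.ker π := by
    intro c hc
    rw [← hker c hc]
    have : c = ∑ a, c a • (Pi.single a 1 : Fin l → A) := by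
      conv_lhs => rw [pi_eq_sum_univ' c]
    rw [this, map_sum]
    refine Submodule.sum_mem _ fun a _ => ?_
    rw [map_smul]
    exact Submodule.smul_mem_smul (hrel c (by rw [← hπ]; exact hc) a) (hρker _)
  have hbot := Submodule.eq_bot_of_le_smul_of_le_jacobson_bot _ _ hfg hle
    (IsLocalRing.maximalIdeal_le_jacobson _)
  intro c hc
  have : c ∈ LinearMap.ker π := by rw [LinearMap.mem_ker, hπ]; exact hc
  rw [hbot] at this
  exact this

lemma linInd_of_PDLT {R : Type} [CommRing R] [IsDomain R] (p : Ideal R) [p.IsPrime]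
    {N : Type} [AddCommGroup N] [Module R N] {l : ℕ} (g : Fin l → N)
    (hg : Submodule.span R (Set.range g) = ⊤)
    (hrel : ∀ c : Fin l → R, ∑ a, c a • g a = 0 → ∀ a, c a ∈ p) (h : PDLT p N 1) :
    ∀ c : Fin l → R, ∑ a, c a • g a = 0 → c = 0 := by
  let A := Localization p.primeCompl
  have : IsLocalRing A := inferInstanceAs (IsLocalRing (Localization.AtPrime p))
  have hproj : Module.Projective A (LocalizedModule p.primeCompl N) := (PDLT.one_iff p).mp h
  let ι := LocalizedModule.mkLinearMap p.primeCompl N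
  have hι : ∀ (c : Fin l → R), ι (∑ a, c a • g a) = ∑ a, algebraMap R A (c a) • ι (g a) := by
    intro c
    rw [map_sum]
    refine Finset.sum_congr rfl fun a _ => ?_
    rw [map_smul, algebraMap_smul]
  have key := linInd_of_local (A := A) (fun a => ι (g a)) ?_ ?_
  · intro c hc
    have h1 := key (fun a => algebraMap R A (c a)) (by rw [← hι, hc, map_zero])
    funext a
    have h2 : algebraMap R A (c a) = 0 := congrFun h1 a
    have hinj : Function.Injective (algebraMap R A) :=
      IsLocalization.injective A (M := p.primeCompl) p.primeCompl_le_nonZeroDivisors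
    exact hinj (h2.trans (map_zero _).symm)
  · rw [eq_top_iff]
    rintro z -
    induction z using LocalizedModule.induction_on with
    | h m s =>
      have hm : m ∈ Submodule.span R (Set.range g) := by rw [hg]; trivial
      obtain ⟨c, hc⟩ := (Submodule.mem_span_range_iff_exists_fun R).mp hm
      have : LocalizedModule.mk m s = (Localization.mk 1 s : A) • ι m := by
        simp [ι, LocalizedModule.mkLinearMap_apply, LocalizedModule.mk_smul_mk]
      rw [this, ← hc, hι]
      refine Submodule.smul_mem _ _ (Submodule.sum_mem _ fun a _ => Submodule.smul_mem _ _ ?_)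
      exact Submodule.subset_span ⟨a, rfl⟩
  · intro c hc a
    obtain ⟨s, hs⟩ := IsLocalization.exist_integer_multiples_of_finite p.primeCompl c
    choose r hr using hs
    have h0 : ι (∑ a, r a • g a) = 0 := by
      rw [hι]
      have : ∀ a, algebraMap R A (r a) • ι (g a) = (s : R) • (c a • ι (g a)) := by
        intro a
        have := hr a
        rw [this, smul_assoc]
      rw [Finset.sum_congr rfl fun a _ => this a, ← Finset.smul_sum, hc, smul_zero]
    obtain ⟨u, hu⟩ := (IsLocalizedModule.eq_zero_iff p.primeCompl ι).mp h0
    have h1 : ∑ a, ((u : R) * r a) • g a = 0 := by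
      rw [← hu, Submonoid.smul_def, Finset.smul_sum]
      refine Finset.sum_congr rfl fun a _ => mul_smul _ _ _
    have h2 := hrel _ h1 a
    have h3 : r a ∈ p := ((inferInstance : p.IsPrime).mem_or_mem h2).resolve_left u.2
    have h4 : algebraMap R A (r a) ∈ IsLocalRing.maximalIdeal A :=
      (IsLocalization.AtPrime.to_map_mem_maximal_iff (Localization.AtPrime p) p (r a)).mpr h3
    rw [hr a, Algebra.smul_def] at h4
    have h5 : IsUnit (algebraMap R A s) := IsLocalization.map_units A s
    exact (Ideal.unit_mul_mem_iff_mem _ h5).mp h4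

variable {K : Type} [Field K] {n : ℕ}

lemma hc_mul {d : ℕ} {g : MvPolynomial (Fin n) K} (hg : g.IsHomogeneous d)
    (r : MvPolynomial (Fin n) K) (j : ℕ) : homogeneousComponent j (r * g) =
      (if d ≤ j then homogeneousComponent (j - d) r else 0) * g := by
  have hmem : g ∈ homogeneousSubmodule (Fin n) K d := hg
  let inst : GradedAlgebra (homogeneousSubmodule (Fin n) K) := MvPolynomial.gradedAlgebra
  have e : ∀ (f : MvPolynomial (Fin n) K) (i : ℕ), homogeneousComponent i f =
      ((DirectSum.decompose (homogeneousSubmodule (Fin n) K) f i : _) : MvPolynomial (Fin n) K) := by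
    intro f i
    exact (decomposition.decompose'_apply f i).symm
  split_ifs with h
  · rw [e, e, DirectSum.coe_decompose_mul_of_right_mem_of_le _ hmem h]
  · rw [e, DirectSum.coe_decompose_mul_of_right_mem_of_not_le _ hmem h, zero_mul]

/-- Graded components in a shifted free module. -/
def fcomp {k : ℕ} (e : Fin k → ℕ) (j : ℕ) :
    (Fin k → MvPolynomial (Fin n) K) →ₗ[K] (Fin k → MvPolynomial (Fin n) K) :=
  LinearMap.pi fun i => (if e i ≤ j then homogeneousComponent (j - e i) else 0) ∘ₗ LinearMap.proj i

lemma fcomp_apply {k : ℕ} (e : Fin k → ℕ) (j : ℕ) (f : Fin k → MvPolynomial (Fin n) K) (i : Fin k) :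
    fcomp e j f i = if e i ≤ j then homogeneousComponent (j - e i) (f i) else 0 := by
  unfold fcomp
  simp only [LinearMap.pi_apply, LinearMap.comp_apply, LinearMap.proj_apply]
  split_ifs <;> rfl

lemma fcomp_idem {k : ℕ} (e : Fin k → ℕ) (j : ℕ) (f : Fin k → MvPolynomial (Fin n) K) :
    fcomp e j (fcomp e j f) = fcomp e j f := by
  funext i
  simp only [fcomp_apply]
  split_ifs with h
  · rw [homogeneousComponent_of_mem (homogeneousComponent_mem _ _), if_pos rfl]
  · rfl

lemma fcomp_smul {k : ℕ} (e : Fin k → ℕ) {d : ℕ} {g : Fin k → MvPolynomial (Fin n) K}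
    (hg : fcomp e d g = g) (r : MvPolynomial (Fin n) K) (j : ℕ) :
    fcomp e j (r • g) = (if d ≤ j then homogeneousComponent (j - d) r else 0) • g := by
  funext i
  rw [fcomp_apply, Pi.smul_apply, Pi.smul_apply, smul_eq_mul, smul_eq_mul]
  by_cases hi : e i ≤ d
  · have hgi : (g i).IsHomogeneous (d - e i) := by
      have := congrFun hg i
      rw [fcomp_apply, if_pos hi] at this
      rw [← this]
      exact homogeneousComponent_isHomogeneous _ _
    rw [hc_mul hgi]
    by_cases hj : d ≤ j
    · rw [if_pos (hi.trans hj), if_pos hj, if_pos (show d - e i ≤ j - e i by omega)]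
      rw [show j - e i - (d - e i) = j - d by omega]
    · rw [if_neg hj]
      split_ifs with h1 h2
      · omega
      · rfl
      · rw [zero_mul]
  · have : g i = 0 := by
      have := congrFun hg i
      rw [fcomp_apply, if_neg hi] at this
      exact this.symm
    rw [this]; simp

lemma sum_fcomp {k : ℕ} (e : Fin k → ℕ) (f : Fin k → MvPolynomial (Fin n) K) :
    ∃ B, f = ∑ j ∈ Finset.range B, fcomp e j f := by
  refine ⟨∑ i, (e i + (f i).totalDegree + 1), ?_⟩
  funext i
  rw [Finset.sum_apply]
  set B := ∑ i, (e i + (f i).totalDegree + 1)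
  have hB : e i + (f i).totalDegree + 1 ≤ B :=
    Finset.single_le_sum (f := fun i => e i + (f i).totalDegree + 1) (fun _ _ => Nat.zero_le _) (Finset.mem_univ i)
  obtain ⟨b, hb⟩ : ∃ b, B = e i + b := ⟨B - e i, by omega⟩
  rw [hb, Finset.sum_range_add]
  have h1 : ∑ j ∈ Finset.range (e i), fcomp e j f i = 0 := by
    apply Finset.sum_eq_zero
    intro j hj
    rw [fcomp_apply, if_neg (by have := Finset.mem_range.mp hj; omega)]
  rw [h1, zero_add]
  conv_lhs => rw [← sum_homogeneousComponent (f i)]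
  have h2 : ∀ j, fcomp e (e i + j) f i = homogeneousComponent j (f i) := by
    intro j; rw [fcomp_apply, if_pos (by omega)]; congr 2; omega
  rw [Finset.sum_congr rfl fun j _ => h2 j]
  apply Finset.sum_subset
  · intro j; simp only [Finset.mem_range]; omega
  · intro j _ hj
    apply homogeneousComponent_eq_zero
    simp only [Finset.mem_range] at hj; omega

/-- Graded submodule. -/
def IsGr {k : ℕ} (e : Fin k → ℕ) (N : Submodule (MvPolynomial (Fin n) K) (Fin k → MvPolynomial (Fin n) K)) :
    Prop := ∀ f ∈ N, ∀ j, fcomp e j f ∈ N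

/-- Homogeneous generating family. -/
def HomGens {k : ℕ} (e : Fin k → ℕ) (N : Submodule (MvPolynomial (Fin n) K) (Fin k → MvPolynomial (Fin n) K))
    (l : ℕ) : Prop := ∃ (g : Fin l → Fin k → MvPolynomial (Fin n) K) (d : Fin l → ℕ),
      (∀ a, fcomp e (d a) (g a) = g a) ∧ Submodule.span _ (Set.range g) = N

lemma exists_homGens {k : ℕ} (e : Fin k → ℕ)
    (N : Submodule (MvPolynomial (Fin n) K) (Fin k → MvPolynomial (Fin n) K)) (hN : IsGr e N) :
    ∃ l, HomGens e N l := by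
  obtain ⟨s, hs⟩ : N.FG := IsNoetherian.noetherian N
  choose B hB using sum_fcomp (K := K) (n := n) e
  classical
  let T : Finset (Fin k → MvPolynomial (Fin n) K) :=
    s.biUnion fun f => (Finset.range (B f)).image fun j => fcomp e j f
  have hT : ∀ t ∈ T, ∃ d, fcomp e d t = t := by
    intro t ht
    simp only [T, Finset.mem_biUnion, Finset.mem_image] at ht
    obtain ⟨f, _, j, _, rfl⟩ := ht
    exact ⟨j, fcomp_idem e j f⟩
  choose d hd using hT
  refine ⟨T.card, fun a => (T.equivFin.symm a : _), fun a => d _ (T.equivFin.symm a).2, fun a => hd _ _, ?_⟩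
  have hr : Set.range (fun a => ((T.equivFin.symm a : T) : Fin k → MvPolynomial (Fin n) K)) = T := by
    ext t
    constructor
    · rintro ⟨a, rfl⟩; exact (T.equivFin.symm a).2
    · intro ht; exact ⟨T.equivFin ⟨t, ht⟩, by simp⟩
  rw [hr]
  apply le_antisymm
  · rw [Submodule.span_le]
    intro t ht
    simp only [T, Finset.coe_biUnion, Set.mem_iUnion, Finset.coe_image, Set.mem_image] at ht
    obtain ⟨f, hf, j, _, rfl⟩ := ht
    exact hN f (hs ▸ Submodule.subset_span hf) j
  · rw [← hs, Submodule.span_le]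
    intro f hf
    rw [hB f]
    refine Submodule.sum_mem _ fun j hj => Submodule.subset_span ?_
    simp only [T, Finset.coe_biUnion, Set.mem_iUnion, Finset.coe_image, Set.mem_image]
    exact ⟨f, hf, j, hj, rfl⟩

lemma fcomp_comb {k l : ℕ} (e : Fin k → ℕ) (g : Fin l → Fin k → MvPolynomial (Fin n) K) (d : Fin l → ℕ)
    (hg : ∀ a, fcomp e (d a) (g a) = g a) (c : Fin l → MvPolynomial (Fin n) K) (j : ℕ) :
    fcomp e j (∑ a, c a • g a) = ∑ a, fcomp d j c a • g a := by
  rw [map_sum]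
  refine Finset.sum_congr rfl fun a _ => ?_
  rw [fcomp_smul e (hg a), fcomp_apply]

lemma not_mem_PS_univ {r : MvPolynomial (Fin n) K} (h : r ∉ PS K Finset.univ) : r.coeff 0 ≠ 0 := by
  intro h0
  apply h
  rw [mem_PS]
  intro m hm
  by_contra hcon
  push Not at hcon
  have : m = 0 := by ext i; exact hcon i (Finset.mem_univ i)
  rw [this, mem_support_iff] at hm
  exact hm h0

/-- Relations among a minimal family of homogeneous generators are in the maximal ideal. -/
lemma min_rel {k l : ℕ} (e : Fin k → ℕ)
    (N : Submodule (MvPolynomial (Fin n) K) (Fin k → MvPolynomial (Fin n) K))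
    (hmin : ∀ l' < l, ¬ HomGens e N l')
    (g : Fin l → Fin k → MvPolynomial (Fin n) K) (d : Fin l → ℕ)
    (hg : ∀ a, fcomp e (d a) (g a) = g a) (hspan : Submodule.span _ (Set.range g) = N)
    (c : Fin l → MvPolynomial (Fin n) K) (hc : ∑ a, c a • g a = 0) (b : Fin l) :
    c b ∈ PS K (Finset.univ : Finset (Fin n)) := by
  by_contra hb
  have h0 := not_mem_PS_univ hb
  have h1 := fcomp_comb e g d hg c (d b)
  rw [hc, map_zero] at h1
  obtain ⟨l', rfl⟩ : ∃ l', l = l' + 1 := ⟨l - 1, by have := b.2; omega⟩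
  apply hmin l' (Nat.lt_succ_self _)
  refine ⟨fun a => g (b.succAbove a), fun a => d (b.succAbove a), fun a => hg _, ?_⟩
  rw [Fin.sum_univ_succAbove _ b, fcomp_apply, if_pos le_rfl, Nat.sub_self, homogeneousComponent_zero] at h1
  set W := Submodule.span (MvPolynomial (Fin n) K) (Set.range fun a => g (b.succAbove a)) with hW
  have hgb : g b ∈ W := by
    have h2 : (C (coeff 0 (c b)) : MvPolynomial (Fin n) K) • g b ∈ W := by
      rw [eq_neg_of_add_eq_zero_left h1.symm]
      refine W.neg_mem (Submodule.sum_mem _ fun a _ => W.smul_mem _ (Submodule.subset_span ⟨a, rfl⟩))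
    have h3 := W.smul_mem (C (coeff 0 (c b))⁻¹ : MvPolynomial (Fin n) K) h2
    rwa [smul_smul, ← C_mul, inv_mul_cancel₀ h0, C_1, one_smul] at h3
  rw [← hspan]
  apply le_antisymm
  · refine Submodule.span_mono ?_
    rintro _ ⟨a, rfl⟩; exact ⟨_, rfl⟩
  · rw [Submodule.span_le]
    rintro _ ⟨a, rfl⟩
    rcases Fin.eq_self_or_eq_succAbove b a with h | ⟨a', h⟩
    · rw [h]; exact hgb
    · rw [h]; exact Submodule.subset_span ⟨a', rfl⟩

lemma graded_pd (d : ℕ) : ∀ {k : ℕ} (e : Fin k → ℕ)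
    (N : Submodule (MvPolynomial (Fin n) K) (Fin k → MvPolynomial (Fin n) K)), IsGr e N →
    PDLT (PS K (Finset.univ : Finset (Fin n))) N (d + 1) →
    HasProjectiveDimensionLT (ModuleCat.of (MvPolynomial (Fin n) K) N) (d + 1) := by
  induction d with
  | zero =>
    intro k e N hN h
    classical
    obtain ⟨g, dg, hg, hspan⟩ := Nat.find_spec (exists_homGens e N hN)
    have hmin := fun l' (hl' : l' < Nat.find (exists_homGens e N hN)) => Nat.find_min _ hl'
    have hgN : ∀ a, g a ∈ N := fun a => hspan ▸ Submodule.subset_span ⟨a, rfl⟩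
    have hcoe : ∀ c : Fin _ → MvPolynomial (Fin n) K,
      ((∑ a, c a • (⟨g a, hgN a⟩ : N) : N) : Fin k → MvPolynomial (Fin n) K) = ∑ a, c a • g a := by
      intro c; simp
    have hsp : Submodule.span (MvPolynomial (Fin n) K) (Set.range fun a => (⟨g a, hgN a⟩ : N)) = ⊤ := by
      rw [eq_top_iff]
      rintro ⟨x, hx⟩ -
      have hx' := hx
      rw [← hspan] at hx'
      obtain ⟨c, hc⟩ := (Submodule.mem_span_range_iff_exists_fun _).mp hx'
      refine (Submodule.mem_span_range_iff_exists_fun _).mpr ⟨c, ?_⟩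
      apply Subtype.ext
      rw [hcoe, hc]
    have hli := linInd_of_PDLT (PS K Finset.univ) (fun a => (⟨g a, hgN a⟩ : N)) hsp
      (fun c hc a => min_rel e N hmin g dg hg hspan c (by rw [← hcoe, hc]; rfl) a) h
    have b := Module.Basis.mk (Fintype.linearIndependent_iff.mpr
      (fun c hc => congrFun (hli c hc))) hsp.ge
    have : Module.Free (MvPolynomial (Fin n) K) N := Module.Free.of_basis b
    rw [zero_add, ← projective_iff_hasProjectiveDimensionLT_one]
    exact ModuleCat.projective_of_free b
  | succ d ih =>
    intro k e N hN h
    obtain ⟨l, g, dg, hg, hspan⟩ := exists_homGens e N hN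
    have hgN : ∀ a, g a ∈ N := fun a => hspan ▸ Submodule.subset_span ⟨a, rfl⟩
    let π : (Fin l → MvPolynomial (Fin n) K) →ₗ[MvPolynomial (Fin n) K] N :=
      Fintype.linearCombination _ (fun a => (⟨g a, hgN a⟩ : N))
    have hπ : ∀ c, (π c : Fin k → MvPolynomial (Fin n) K) = ∑ a, c a • g a := by
      intro c; simp [π, Fintype.linearCombination_apply]
    have hsurj : Function.Surjective π := by
      rintro ⟨x, hx⟩
      have hx' := hx
      rw [← hspan] at hx'
      obtain ⟨c, hc⟩ := (Submodule.mem_span_range_iff_exists_fun _).mp hx'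
      exact ⟨c, Subtype.ext (by rw [hπ, hc])⟩
    have hgr : IsGr dg (LinearMap.ker π) := by
      intro c hc j
      have h0 : ∑ a, c a • g a = 0 := by rw [← hπ, LinearMap.mem_ker.mp hc]; rfl
      rw [LinearMap.mem_ker]
      apply Subtype.ext
      rw [hπ, ← fcomp_comb e g dg hg, h0, map_zero]; rfl
    have hex : Function.Exact (LinearMap.ker π).subtype π := LinearMap.exact_subtype_ker_map π
    have hfree : HasProjectiveDimensionLT (ModuleCat.of (MvPolynomial (Fin n) K)
        (Fin l → MvPolynomial (Fin n) K)) 1 := by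
      rw [← projective_iff_hasProjectiveDimensionLT_one]
      exact ModuleCat.projective_of_free (Pi.basisFun _ _)
    have h1 := PDLT.X₁ (PS K Finset.univ) _ _ (Submodule.subtype_injective _) hsurj hex
      (PDLT.of_global _ (hasProjectiveDimensionLT_of_ge _ 1 (d + 1) (by omega))) h
    have h2 := ih dg _ hgr h1
    obtain ⟨S, hS, e1, e2, e3⟩ := exists_ses _ _ (Submodule.subtype_injective _) hsurj hex
    rw [← e3]
    rw [← e1] at h2
    rw [← e2] at hfree
    exact hS.hasProjectiveDimensionLT_X₃ (d + 1) h2 (hasProjectiveDimensionLT_of_ge _ 1 _ (by omega))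

lemma graded_quot (I : Ideal (MvPolynomial (Fin n) K)) (hI : ∀ f ∈ I, ∀ j, homogeneousComponent j f ∈ I)
    (hne : I ≠ ⊥) (hle : I ≤ PS K (Finset.univ : Finset (Fin n))) :
    ¬ PDLT (PS K (Finset.univ : Finset (Fin n))) (MvPolynomial (Fin n) K ⧸ I) 1 ∧
    ∀ d, PDLT (PS K (Finset.univ : Finset (Fin n))) (MvPolynomial (Fin n) K ⧸ I) d →
      HasProjectiveDimensionLT (ModuleCat.of (MvPolynomial (Fin n) K) (MvPolynomial (Fin n) K ⧸ I)) d := by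
  have hmk : ∀ c : MvPolynomial (Fin n) K, c • (Ideal.Quotient.mk I 1) = Ideal.Quotient.mk I c := by
    intro c
    change Ideal.Quotient.mk I (c * 1) = _
    rw [mul_one]
  have hno : ¬ PDLT (PS K (Finset.univ : Finset (Fin n))) (MvPolynomial (Fin n) K ⧸ I) 1 := by
    intro h
    have := linInd_of_PDLT (PS K (Finset.univ : Finset (Fin n))) (l := 1)
      (fun _ => Ideal.Quotient.mk I 1) ?_ ?_ h
    · obtain ⟨c, hc, hc0⟩ := Submodule.exists_mem_ne_zero_of_ne_bot hne
      apply hc0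
      have h2 := this (fun _ => c) (by
        rw [Fin.sum_univ_one, hmk]; exact Ideal.Quotient.eq_zero_iff_mem.mpr hc)
      exact congrFun h2 0
    · rw [eq_top_iff]
      rintro x -
      obtain ⟨x, rfl⟩ := Ideal.Quotient.mk_surjective x
      rw [← hmk x]
      refine Submodule.smul_mem _ _ ?_
      apply Submodule.subset_span
      exact Set.mem_range_self (0 : Fin 1)
    · intro c hc a
      rw [Fin.sum_univ_one, hmk] at hc
      rw [Subsingleton.elim a 0]
      exact hle (Ideal.Quotient.eq_zero_iff_mem.mp hc)
  refine ⟨hno, ?_⟩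
  intro d h
  match d, h with
  | 0, h => exact absurd (PDLT.mono _ h (Nat.zero_le 1)) hno
  | 1, h => exact absurd h hno
  | d + 2, h =>
    have hfree : HasProjectiveDimensionLT (ModuleCat.of (MvPolynomial (Fin n) K)
        (MvPolynomial (Fin n) K)) 1 := by
      rw [← projective_iff_hasProjectiveDimensionLT_one]
      exact ModuleCat.projective_of_free (Module.Basis.singleton Unit _)
    have hex : Function.Exact (Submodule.subtype I) (Submodule.mkQ I) := LinearMap.exact_subtype_mkQ I
    have h1 : PDLT (PS K (Finset.univ : Finset (Fin n))) I (d + 1) :=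
      PDLT.X₁ _ _ _ (Submodule.subtype_injective _) (Submodule.mkQ_surjective _) hex
        (PDLT.of_global _ (hasProjectiveDimensionLT_of_ge _ 1 (d + 1) (by omega))) h
    let E : (Fin 1 → MvPolynomial (Fin n) K) ≃ₗ[MvPolynomial (Fin n) K] MvPolynomial (Fin n) K :=
      LinearEquiv.funUnique (Fin 1) _ _
    have hE : ∀ f, E f = f 0 := fun f => rfl
    let N : Submodule (MvPolynomial (Fin n) K) (Fin 1 → MvPolynomial (Fin n) K) := Submodule.comap E.toLinearMap I
    have e : N ≃ₗ[MvPolynomial (Fin n) K] I := E.ofSubmodule' I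
    have hgr : IsGr (fun _ => 0) N := by
      intro f hf j
      change fcomp (fun _ => 0) j f 0 ∈ I
      rw [fcomp_apply, if_pos (Nat.zero_le _)]
      exact hI _ hf _
    have h2 := graded_pd d (fun _ => 0) N hgr ((PDLT.congr _ e).mpr h1)
    have h3 : HasProjectiveDimensionLT (ModuleCat.of (MvPolynomial (Fin n) K) I) (d + 1) :=
      hasProjectiveDimensionLT_of_iso e.toModuleIso _
    obtain ⟨S, hS, e1, e2, e3⟩ := exists_ses _ _ (Submodule.subtype_injective _) (Submodule.mkQ_surjective _) hex
    rw [← e1] at h3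
    rw [← e2] at hfree
    have := hS.hasProjectiveDimensionLT_X₃ (d + 1) h3 (hasProjectiveDimensionLT_of_ge _ 1 _ (by omega))
    rw [e3] at this
    exact this

end Graded

section Graph
variable (K : Type) [Field K] {n : ℕ} (G : SimpleGraph (Fin n))

lemma mem_edgeIdeal {f : MvPolynomial (Fin n) K} :
    f ∈ edgeIdeal K G ↔ ∀ m ∈ f.support, ∃ u v, G.Adj u v ∧ m u ≠ 0 ∧ m v ≠ 0 := by
  have hset : {m : MvPolynomial (Fin n) K | ∃ u v : Fin n, G.Adj u v ∧ m = X u * X v} =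
      (fun s => monomial s (1 : K)) '' {s | ∃ u v, G.Adj u v ∧ s = Finsupp.single u 1 + Finsupp.single v 1} := by
    ext m
    constructor
    · rintro ⟨u, v, h, rfl⟩
      exact ⟨_, ⟨u, v, h, rfl⟩, by simp [X, monomial_mul]⟩
    · rintro ⟨_, ⟨u, v, h, rfl⟩, rfl⟩
      exact ⟨u, v, h, by simp [X, monomial_mul]⟩
  rw [edgeIdeal, hset, mem_ideal_span_monomial_image]
  refine forall₂_congr fun m hm => ?_
  constructor
  · rintro ⟨_, ⟨u, v, h, rfl⟩, hle⟩
    refine ⟨u, v, h, ?_, ?_⟩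
    · have := hle u
      simp at this; omega
    · have := hle v
      simp at this; omega
  · rintro ⟨u, v, h, hu, hv⟩
    refine ⟨_, ⟨u, v, h, rfl⟩, ?_⟩
    intro w
    have huv := h.ne
    simp only [Finsupp.add_apply, Finsupp.single_apply]
    split_ifs with h1 h2 h2
    · subst h1; subst h2; exact absurd rfl huv
    · subst h1; omega
    · subst h2; omega
    · omega

lemma edgeIdeal_hom : ∀ f ∈ edgeIdeal K G, ∀ j, homogeneousComponent j f ∈ edgeIdeal K G := by
  intro f hf j
  rw [mem_edgeIdeal] at hf ⊢
  intro m hm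
  apply hf m
  rw [mem_support_iff, coeff_homogeneousComponent] at hm
  rw [mem_support_iff]
  intro h0; apply hm; split_ifs <;> simp [h0]

lemma edgeIdeal_le : edgeIdeal K G ≤ PS K (Finset.univ : Finset (Fin n)) := by
  intro f hf
  rw [mem_edgeIdeal] at hf
  rw [mem_PS]
  intro m hm
  obtain ⟨u, v, _, hu, _⟩ := hf m hm
  exact ⟨u, Finset.mem_univ u, hu⟩

lemma edgeIdeal_ne_bot {u v : Fin n} (h : G.Adj u v) : edgeIdeal K G ≠ ⊥ := by
  intro hb
  have : (X u * X v : MvPolynomial (Fin n) K) ∈ edgeIdeal K G := Ideal.subset_span ⟨u, v, h, rfl⟩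
  rw [hb, Ideal.mem_bot] at this
  rcases mul_eq_zero.mp this with h | h <;> exact X_ne_zero _ h

lemma PS_univ : PS K (Finset.univ : Finset (Fin n)) = maxIdeal K (Fin n) := by
  simp [PS, maxIdeal]

instance PS_univ_max : (PS K (Finset.univ : Finset (Fin n))).IsMaximal := by
  have : PS K (Finset.univ : Finset (Fin n)) =
      RingHom.ker (constantCoeff : MvPolynomial (Fin n) K →+* K) := by
    ext f
    rw [RingHom.mem_ker, constantCoeff_eq]
    constructor
    · intro h
      by_contra h0
      obtain ⟨i, _, hi⟩ := (mem_PS K).mp h 0 (mem_support_iff.mpr h0)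
      exact hi rfl
    · intro h
      by_contra h0
      exact not_mem_PS_univ h0 h
  rw [this]
  exact RingHom.ker_isMaximal_of_surjective _ (fun a => ⟨C a, constantCoeff_C _ a⟩)

lemma pd_main {u v : Fin n} (h : G.Adj u v) :
    mdepth (maxIdeal K (Fin n)) (MvPolynomial (Fin n) K ⧸ edgeIdeal K G) < n ∧
    projDim (MvPolynomial (Fin n) K) (ModuleCat.of (MvPolynomial (Fin n) K)
      (MvPolynomial (Fin n) K ⧸ edgeIdeal K G)) =
      n - mdepth (maxIdeal K (Fin n)) (MvPolynomial (Fin n) K ⧸ edgeIdeal K G) ∧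
    HasProjectiveDimensionLT (ModuleCat.of (MvPolynomial (Fin n) K)
      (MvPolynomial (Fin n) K ⧸ edgeIdeal K G))
      (n - mdepth (maxIdeal K (Fin n)) (MvPolynomial (Fin n) K ⧸ edgeIdeal K G) + 1) := by
  rw [← PS_univ]
  obtain ⟨hno, hgr⟩ := graded_quot (edgeIdeal K G) (edgeIdeal_hom K G) (edgeIdeal_ne_bot K G h)
    (edgeIdeal_le K G)
  have hne : PS K (Finset.univ : Finset (Fin n)) •
      (⊤ : Submodule (MvPolynomial (Fin n) K) (MvPolynomial (Fin n) K ⧸ edgeIdeal K G)) ≠ ⊤ := by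
    intro htop
    have h1 : Ideal.Quotient.mk (edgeIdeal K G) 1 ∈ PS K (Finset.univ : Finset (Fin n)) •
      (⊤ : Submodule (MvPolynomial (Fin n) K) (MvPolynomial (Fin n) K ⧸ edgeIdeal K G)) := by
      rw [htop]; trivial
    have h2 : ∀ x ∈ PS K (Finset.univ : Finset (Fin n)) •
      (⊤ : Submodule (MvPolynomial (Fin n) K) (MvPolynomial (Fin n) K ⧸ edgeIdeal K G)),
      ∃ y ∈ PS K (Finset.univ : Finset (Fin n)), Ideal.Quotient.mk (edgeIdeal K G) y = x := by
      intro x hx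
      induction hx using Submodule.smul_induction_on' with
      | smul r hr z hz =>
        obtain ⟨z, rfl⟩ := Ideal.Quotient.mk_surjective z
        exact ⟨r * z, Ideal.mul_mem_right _ _ hr, rfl⟩
      | add x hx y hy h1 h2 =>
        obtain ⟨a, ha, rfl⟩ := h1
        obtain ⟨b, hb, rfl⟩ := h2
        exact ⟨a + b, add_mem ha hb, map_add _ _ _⟩
    obtain ⟨y, hy, hy1⟩ := h2 _ h1
    rw [Ideal.Quotient.eq] at hy1
    have := sub_mem hy (edgeIdeal_le K G hy1)
    rw [sub_sub_cancel] at this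
    exact (Ideal.ne_top_iff_one _).mp (PS_prime K (Finset.univ : Finset (Fin n))).ne_top this
  obtain ⟨hd, hpd⟩ := AB_formula (PS K (Finset.univ : Finset (Fin n))) n
    (fun M _ _ _ => by simpa using PDLT_gl K (Finset.univ : Finset (Fin n)) M)
    (fun d hd => by simpa using (PDLT_PS K (Finset.Subset.refl (Finset.univ : Finset (Fin n)))).mp hd)
    (MvPolynomial (Fin n) K ⧸ edgeIdeal K G) (fun h0 => hno (PDLT.mono _ h0 (Nat.zero_le 1))) hne
  rw [hpd 1] at hno
  refine ⟨by omega, ?_, hgr _ ((hpd _).mpr (Nat.lt_succ_self _))⟩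
  rw [projDim_eq]
  have hset : {d : ℕ | HasProjectiveDimensionLT (ModuleCat.of (MvPolynomial (Fin n) K)
      (MvPolynomial (Fin n) K ⧸ edgeIdeal K G)) (d + 1)} =
      Set.Ici (n - mdepth (PS K (Finset.univ : Finset (Fin n))) (MvPolynomial (Fin n) K ⧸ edgeIdeal K G)) := by
    ext d
    constructor
    · intro hd
      have := (hpd _).mp (PDLT.of_global _ hd)
      simp only [Set.mem_Ici]; omega
    · intro hd
      exact hgr _ ((hpd _).mpr (Nat.lt_succ_of_le hd))
  rw [hset, csInf_Ici]

/-- Finset version of vertex covers. -/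
def Cov (C : Finset (Fin n)) : Prop := ∀ ⦃u v⦄, G.Adj u v → u ∈ C ∨ v ∈ C

lemma coverNumber_le {C : Finset (Fin n)} (hC : Cov G C) : coverNumber G ≤ C.card := by
  apply Nat.sInf_le
  refine ⟨(C : Set (Fin n)), fun u v h => by simpa using hC h, by simp⟩

lemma exists_coverNumber : ∃ C : Finset (Fin n), Cov G C ∧ C.card = coverNumber G := by
  classical
  have hne : {k | ∃ C : Set (Fin n), IsVertexCover G C ∧ C.ncard = k}.Nonempty :=
    ⟨_, Set.univ, fun u v _ => Or.inl trivial, rfl⟩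
  obtain ⟨C, hC, hk⟩ := Nat.sInf_mem hne
  refine ⟨C.toFinset, fun u v h => by simpa using hC h, ?_⟩
  rw [← Set.ncard_eq_toFinset_card']; exact hk

lemma edgeIdeal_le_PS_iff {C : Finset (Fin n)} : edgeIdeal K G ≤ PS K C ↔ Cov G C := by
  rw [edgeIdeal, Ideal.span_le]
  constructor
  · intro h u v huv
    have := (PS_prime K C).mem_or_mem (h ⟨u, v, huv, rfl⟩)
    simpa [X_mem_PS] using this
  · rintro h _ ⟨u, v, huv, rfl⟩
    rcases h huv with hu | hv
    · exact Ideal.mul_mem_right _ _ ((X_mem_PS K).mpr hu)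
    · exact Ideal.mul_mem_left _ _ ((X_mem_PS K).mpr hv)

lemma prime_ge_edgeIdeal (P : Ideal (MvPolynomial (Fin n) K)) [hP : P.IsPrime] (h : edgeIdeal K G ≤ P) :
    ∃ C, Cov G C ∧ PS K C ≤ P := by
  classical
  refine ⟨Finset.univ.filter fun v => X v ∈ P, ?_, ?_⟩
  · intro u v huv
    have := hP.mem_or_mem (h (Ideal.subset_span ⟨u, v, huv, rfl⟩))
    simpa using this
  · rw [PS_le_iff]; simp

lemma dim_edgeIdeal : ringKrullDim (MvPolynomial (Fin n) K ⧸ edgeIdeal K G) =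
    ((n - coverNumber G : ℕ) : WithBot ℕ∞) := by
  apply le_antisymm
  · have hdim : ∀ J : Ideal (MvPolynomial (Fin n) K), ringKrullDim (MvPolynomial (Fin n) K ⧸ J) =
        Order.krullDim (PrimeSpectrum.zeroLocus (R := MvPolynomial (Fin n) K) J) := fun J =>
      ringKrullDim_quotient J
    rw [hdim, Order.krullDim]
    refine iSup_le fun s => ?_
    obtain ⟨C, hC, hCP⟩ := prime_ge_edgeIdeal K G (s 0).1.asIdeal (s 0).2
    have h1 : (s.length : WithBot ℕ∞) ≤ ringKrullDim (MvPolynomial (Fin n) K ⧸ PS K C) := by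
      rw [hdim]
      let s' : LTSeries (PrimeSpectrum.zeroLocus (R := MvPolynomial (Fin n) K) (PS K C)) :=
        { length := s.length
          toFun := fun i => ⟨(s i).1, hCP.trans (s.monotone (Fin.zero_le i))⟩
          step := fun i => s.step i }
      exact Order.LTSeries.length_le_krullDim s'
    rw [dim_PS] at h1
    refine h1.trans ?_
    have := coverNumber_le G hC
    norm_cast
    omega
  · obtain ⟨C, hC, hk⟩ := exists_coverNumber G
    rw [← hk, ← dim_PS K C]
    exact ringKrullDim_le_of_surjective (Ideal.Quotient.factor ((edgeIdeal_le_PS_iff K G).mpr hC))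
      (Ideal.Quotient.factor_surjective _)

end Graph

section VNum
variable (K : Type) [Field K] {n : ℕ} (G : SimpleGraph (Fin n))

lemma mem_edgeIdeal_of_covers {f : MvPolynomial (Fin n) K} (h : ∀ C, Cov G C → f ∈ PS K C) :
    f ∈ edgeIdeal K G := by
  classical
  rw [mem_edgeIdeal]
  intro m hm
  by_contra hcon
  push Not at hcon
  have hT : Cov G (Finset.univ.filter fun v => m v = 0) := by
    intro u v huv
    have := hcon u v huv
    simp only [Finset.mem_filter, Finset.mem_univ, true_and]
    by_cases hu : m u = 0
    · exact Or.inl hu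
    · exact Or.inr (this hu)
  obtain ⟨i, hi, hi'⟩ := (mem_PS K).mp (h _ hT) m hm
  exact hi' (by simpa using hi)

lemma span_pair_eq (u v : Fin n) :
    (Ideal.span {X u, X v} : Ideal (MvPolynomial (Fin n) K)) = PS K {u, v} := by
  unfold PS
  simp [Set.image_pair]

lemma mem_coverIdeal {f : MvPolynomial (Fin n) K} :
    f ∈ coverIdeal K G ↔ ∀ u v, G.Adj u v → f ∈ PS K {u, v} := by
  simp only [coverIdeal, Submodule.mem_iInf, span_pair_eq]

lemma mem_colon' {I : Ideal (MvPolynomial (Fin n) K)} {f g : MvPolynomial (Fin n) K} :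
    g ∈ I.colon (Ideal.span {f}) ↔ g * f ∈ I := by
  rw [Submodule.mem_colon]
  constructor
  · intro h; exact h f (Ideal.mem_span_singleton_self f)
  · intro h p hp
    obtain ⟨c, rfl⟩ := Ideal.mem_span_singleton'.mp hp
    have : g • (c * f) = c * (g * f) := by simp; ring
    rw [this]; exact I.mul_mem_left _ h

lemma vNumber_ge {d : ℕ} {f : MvPolynomial (Fin n) K} (hf : f.IsHomogeneous d)
    (hp : ((coverIdeal K G).colon (Ideal.span {f})).IsPrime) : coverNumber G - 1 ≤ d := by
  classical
  let s : Finset (Fin n × Fin n) := Finset.univ.filter fun e => G.Adj e.1 e.2 ∧ f ∉ PS K {e.1, e.2}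
  have h1 : s.inf (fun e => PS K ({e.1, e.2} : Finset (Fin n))) ≤ (coverIdeal K G).colon (Ideal.span {f}) := by
    intro g hg
    rw [mem_colon', mem_coverIdeal]
    intro u v huv
    by_cases hfu : f ∈ PS K {u, v}
    · exact Ideal.mul_mem_left _ _ hfu
    · have hmem : (u, v) ∈ s := by simp [s, huv, hfu]
      exact Ideal.mul_mem_right _ _ (Finset.inf_le (f := fun e : Fin n × Fin n => PS K ({e.1, e.2} : Finset (Fin n))) hmem hg)
  obtain ⟨⟨u, v⟩, he, hle⟩ := (Ideal.IsPrime.inf_le' hp).mp h1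
  simp only [s, Finset.mem_filter, Finset.mem_univ, true_and] at he
  obtain ⟨huv, hfuv⟩ := he
  have hxu : (X u : MvPolynomial (Fin n) K) * f ∈ coverIdeal K G := by
    rw [← mem_colon']
    exact hle ((X_mem_PS K).mpr (by simp))
  rw [mem_PS] at hfuv
  push Not at hfuv
  obtain ⟨m, hm, hm0⟩ := hfuv
  have hcov : Cov G (insert u m.support) := by
    intro a b hab
    have h2 := (mem_PS K).mp ((mem_coverIdeal K G).mp hxu a b hab) (Finsupp.single u 1 + m) (by
      rw [mem_support_iff, add_comm, mul_comm, coeff_mul_X]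
      exact mem_support_iff.mp hm)
    obtain ⟨i, hi, hi0⟩ := h2
    have : i ∈ insert u m.support := by
      rw [Finset.mem_insert, Finsupp.mem_support_iff]
      by_contra hcon
      push Not at hcon
      apply hi0
      simp [hcon.2, Finsupp.single_apply, Ne.symm hcon.1]
    simp only [Finset.mem_insert, Finset.mem_singleton] at hi
    rcases hi with rfl | rfl
    · exact Or.inl this
    · exact Or.inr this
  have h3 := coverNumber_le G hcov
  have h4 := Finset.card_insert_le u m.support
  have h5 : m.support.card ≤ d := by
    have hdeg := hf (mem_support_iff.mp hm)
    rw [← hdeg, Finsupp.weight_apply, Finsupp.sum]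
    rw [Finset.card_eq_sum_ones]
    refine Finset.sum_le_sum fun i hi => ?_
    have := Finsupp.mem_support_iff.mp hi
    simp; omega
  omega

lemma vNumber_mem {A : Finset (Fin n)} {u v : Fin n} (huA : u ∉ A) (hvA : v ∉ A) (huv : G.Adj u v)
    (hu : Cov G (insert u A)) (hv : Cov G (insert v A)) :
    ∃ f : MvPolynomial (Fin n) K, f.IsHomogeneous A.card ∧
      ((coverIdeal K G).colon (Ideal.span {f})).IsPrime := by
  classical
  refine ⟨∏ a ∈ A, X a, ?_, ?_⟩
  · have := IsHomogeneous.prod A (fun a => (X a : MvPolynomial (Fin n) K)) (fun _ => 1)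
      (fun a _ => isHomogeneous_X K a)
    simpa using this
  · have key : ∀ w, Cov G (insert w A) → (X w * ∏ a ∈ A, X a : MvPolynomial (Fin n) K) ∈ coverIdeal K G := by
      intro w hw
      rw [mem_coverIdeal]
      intro a b hab
      have hP := PS_prime K ({a, b} : Finset (Fin n))
      have : ∃ c ∈ insert w A, c ∈ ({a, b} : Finset (Fin n)) := by
        rcases hw hab with h | h
        · exact ⟨a, h, by simp⟩
        · exact ⟨b, h, by simp⟩
      obtain ⟨c, hc, hcab⟩ := this
      rcases Finset.mem_insert.mp hc with rfl | hcA
      · exact Ideal.mul_mem_right _ _ ((X_mem_PS K).mpr hcab)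
      · exact Ideal.mul_mem_left _ _ (Ideal.prod_mem _ hcA ((X_mem_PS K).mpr hcab))
    have heq : (coverIdeal K G).colon (Ideal.span {(∏ a ∈ A, X a : MvPolynomial (Fin n) K)}) = PS K {u, v} := by
      apply le_antisymm
      · intro g hg
        rw [mem_colon'] at hg
        have h1 := (mem_coverIdeal K G).mp hg u v huv
        refine ((PS_prime K ({u, v} : Finset (Fin n))).mem_or_mem h1).resolve_right ?_
        rw [(PS_prime K ({u, v} : Finset (Fin n))).prod_mem_iff]
        rintro ⟨a, ha, hX⟩
        rw [X_mem_PS] at hX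
        simp only [Finset.mem_insert, Finset.mem_singleton] at hX
        rcases hX with rfl | rfl
        · exact huA ha
        · exact hvA ha
      · rw [PS_le_iff]
        intro w hw
        rw [mem_colon']
        simp only [Finset.mem_insert, Finset.mem_singleton] at hw
        rcases hw with rfl | rfl
        · exact key _ hu
        · exact key _ hv
    rw [heq]; exact PS_prime K _

end VNum

section Conn
open scoped Pointwise

/-- Mayer–Vietoris for projective dimension. -/
lemma PDLT.mv {R : Type} [CommRing R] (p : Ideal R) [p.IsPrime] (a b c : Ideal R) (hc : a ⊔ b = c) {d : ℕ}
    (h1 : PDLT p (R ⧸ (a ⊓ b)) d) (h2 : PDLT p ((R ⧸ a) × (R ⧸ b)) (d + 1)) : PDLT p (R ⧸ c) (d + 1) := by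
  subst hc
  let f : (R ⧸ (a ⊓ b)) →ₗ[R] (R ⧸ a) × (R ⧸ b) :=
    (Submodule.factor inf_le_left).prod (Submodule.factor inf_le_right)
  let g : (R ⧸ a) × (R ⧸ b) →ₗ[R] (R ⧸ (a ⊔ b)) :=
    (Submodule.factor (le_sup_left : a ≤ a ⊔ b)) ∘ₗ LinearMap.fst R _ _ -
      (Submodule.factor (le_sup_right : b ≤ a ⊔ b)) ∘ₗ LinearMap.snd R _ _
  have hf : ∀ x, f (Submodule.Quotient.mk x) = (Submodule.Quotient.mk x, Submodule.Quotient.mk x) := fun x => rfl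
  have hg : ∀ x y, g (Submodule.Quotient.mk x, Submodule.Quotient.mk y) = Submodule.Quotient.mk (x - y) := by
    intro x y; rw [Submodule.Quotient.mk_sub]; rfl
  refine PDLT.X₃ p f g ?_ ?_ ?_ h1 h2
  · rw [injective_iff_map_eq_zero]
    intro x hx
    obtain ⟨x, rfl⟩ := Submodule.Quotient.mk_surjective _ x
    rw [hf, Prod.mk_eq_zero, Submodule.Quotient.mk_eq_zero, Submodule.Quotient.mk_eq_zero] at hx
    rw [Submodule.Quotient.mk_eq_zero]; exact hx
  · intro x
    obtain ⟨x, rfl⟩ := Submodule.Quotient.mk_surjective _ x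
    exact ⟨(Submodule.Quotient.mk x, Submodule.Quotient.mk 0), by rw [hg, sub_zero]⟩
  · rintro ⟨x, y⟩
    obtain ⟨x, rfl⟩ := Submodule.Quotient.mk_surjective _ x
    obtain ⟨y, rfl⟩ := Submodule.Quotient.mk_surjective _ y
    rw [hg, Submodule.Quotient.mk_eq_zero]
    constructor
    · intro h
      obtain ⟨s, hs, t, ht, hst⟩ := Submodule.mem_sup.mp h
      refine ⟨Submodule.Quotient.mk (x - s), ?_⟩
      rw [hf, Prod.mk.injEq, Submodule.Quotient.eq, Submodule.Quotient.eq]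
      refine ⟨by simpa using hs, ?_⟩
      have : x - s - y = t := by rw [sub_right_comm, ← hst]; ring
      rw [this]; exact ht
    · rintro ⟨z, hz⟩
      obtain ⟨z, rfl⟩ := Submodule.Quotient.mk_surjective _ z
      rw [hf, Prod.mk.injEq, Submodule.Quotient.eq, Submodule.Quotient.eq] at hz
      have : x - y = -(z - x) + (z - y) := by ring
      rw [this]
      exact add_mem (Ideal.mem_sup_left (a.neg_mem hz.1)) (Ideal.mem_sup_right hz.2)

variable (K : Type) [Field K] {n : ℕ} (G : SimpleGraph (Fin n))

/-- Minimal covers. -/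
def MinCov (C : Finset (Fin n)) : Prop := Cov G C ∧ ∀ C', Cov G C' → C' ⊆ C → C' = C

lemma exists_minCov (C : Finset (Fin n)) (hC : Cov G C) : ∃ D ⊆ C, MinCov G D := by
  induction C using Finset.strongInduction with
  | H C ih =>
    by_cases h : ∀ C', Cov G C' → C' ⊆ C → C' = C
    · exact ⟨C, Finset.Subset.refl _, hC, h⟩
    · push Not at h
      obtain ⟨C', h1, h2, h3⟩ := h
      obtain ⟨D, hD, hD'⟩ := ih C' (Finset.ssubset_iff_subset_ne.mpr ⟨h2, h3⟩) h1
      exact ⟨D, hD.trans h2, hD'⟩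

lemma sum_not_mem {U C : Finset (Fin n)} (hCU : C ⊆ U) (hne : C ≠ U) :
    (∑ v ∈ U, X v : MvPolynomial (Fin n) K) ∉ PS K C := by
  classical
  intro h
  obtain ⟨v, hvU, hvC⟩ := Finset.exists_of_ssubset (Finset.ssubset_iff_subset_ne.mpr ⟨hCU, hne⟩)
  obtain ⟨i, hi, hi0⟩ := (mem_PS K).mp h (Finsupp.single v 1) (by
    rw [mem_support_iff, coeff_sum]
    simp [coeff_X, Finsupp.single_left_inj, hvU])
  apply hvC
  rw [Finsupp.single_apply] at hi0
  split_ifs at hi0 with hh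
  · rwa [hh]
  · exact absurd rfl hi0

/-- Key combinatorial consequence of small projective dimension. -/
lemma exists_A {u v : Fin n} (huv : G.Adj u v)
    (hpd : HasProjectiveDimensionLT (ModuleCat.of (MvPolynomial (Fin n) K)
      (MvPolynomial (Fin n) K ⧸ edgeIdeal K G)) (coverNumber G + 1)) :
    ∃ (A : Finset (Fin n)) (x y : Fin n), A.card + 1 = coverNumber G ∧ x ∉ A ∧ y ∉ A ∧ G.Adj x y ∧
      Cov G (insert x A) ∧ Cov G (insert y A) := by
  classical
  -- choose a pair of minimal covers with minimal union
  let Z : Set ℕ := {k | ∃ C C' : Finset (Fin n), MinCov G C ∧ MinCov G C' ∧ C ≠ C' ∧ (C ∪ C').card = k}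
  have hcompl : ∀ w : Fin n, Cov G (Finset.univ.erase w) := by
    intro w a b hab
    simp only [Finset.mem_erase, Finset.mem_univ, and_true]
    by_contra hcon
    push Not at hcon
    exact hab.ne (hcon.1.trans hcon.2.symm)
  have hZ : Z.Nonempty := by
    obtain ⟨C, hC, hCm⟩ := exists_minCov G _ (hcompl u)
    obtain ⟨C', hC', hCm'⟩ := exists_minCov G _ (hcompl v)
    refine ⟨_, C, C', hCm, hCm', ?_, rfl⟩
    rintro rfl
    have h1 : u ∉ C := fun h => by simpa using hC h
    have h2 : v ∉ C := fun h => by simpa using hC' h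
    rcases hCm.1 huv with h | h
    · exact h1 h
    · exact h2 h
  obtain ⟨C, C', hC, hC', hne, hcard⟩ := Nat.sInf_mem hZ
  have hminU : ∀ D E : Finset (Fin n), MinCov G D → MinCov G E → D ≠ E → (C ∪ C').card ≤ (D ∪ E).card := by
    intro D E hD hE hDE
    rw [hcard]
    exact Nat.sInf_le ⟨D, E, hD, hE, hDE, rfl⟩
  obtain ⟨U, hU⟩ : ∃ U, U = C ∪ C' := ⟨_, rfl⟩
  have hCU : C ⊆ U := hU ▸ Finset.subset_union_left
  have hCU' : C' ⊆ U := hU ▸ Finset.subset_union_right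
  rw [← hU] at hminU
  have hproper : ∀ D, MinCov G D → D ⊆ U → D ≠ U := by
    rintro D hD - rfl
    exact hne ((hD.2 C hC.1 hCU).trans (hD.2 C' hC'.1 hCU').symm)
  let 𝓓 : Finset (Finset (Fin n)) := Finset.univ.filter fun D => MinCov G D ∧ D ⊆ U ∧ D ≠ C
  have h𝓓 : ∀ D, D ∈ 𝓓 ↔ MinCov G D ∧ D ⊆ U ∧ D ≠ C := by simp [𝓓]
  let b : Ideal (MvPolynomial (Fin n) K) := 𝓓.inf (PS K)
  have hb : ∀ f, f ∈ b ↔ ∀ D ∈ 𝓓, f ∈ PS K D := by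
    intro f; simp [b, Submodule.mem_finsetInf]
  have hsup : PS K C ⊔ b = PS K U := by
    apply le_antisymm
    · refine sup_le ((PS_mono K).mpr hCU) ?_
      have : b ≤ PS K C' := Finset.inf_le ((h𝓓 C').mpr ⟨hC', hCU', hne.symm⟩)
      exact this.trans ((PS_mono K).mpr hCU')
    · rw [PS_le_iff]
      intro w hw
      by_cases hwC : w ∈ C
      · exact Ideal.mem_sup_left ((X_mem_PS K).mpr hwC)
      · refine Ideal.mem_sup_right ((hb _).mpr fun D hD => (X_mem_PS K).mpr ?_)
        obtain ⟨hDm, hDU, hDC⟩ := (h𝓓 D).mp hD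
        have h1 : C ∪ D = U := Finset.eq_of_subset_of_card_le (Finset.union_subset hCU hDU)
          (hminU C D hC hDm hDC.symm)
        rw [← h1, Finset.mem_union] at hw
        exact hw.resolve_left hwC
  have hIle : edgeIdeal K G ≤ PS K C ⊓ b := by
    refine le_inf ((edgeIdeal_le_PS_iff K G).mpr hC.1) ?_
    refine Finset.le_inf fun D hD => (edgeIdeal_le_PS_iff K G).mpr ((h𝓓 D).mp hD).1.1
  -- localization
  have hloc : PDLT (PS K U) (MvPolynomial (Fin n) K ⧸ (PS K C ⊓ b)) (coverNumber G + 1) := by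
    have h0 : PDLT (PS K U) (MvPolynomial (Fin n) K ⧸ edgeIdeal K G) (coverNumber G + 1) :=
      PDLT.of_global _ hpd
    let q : (MvPolynomial (Fin n) K ⧸ edgeIdeal K G) →ₗ[MvPolynomial (Fin n) K]
      (MvPolynomial (Fin n) K ⧸ (PS K C ⊓ b)) := Submodule.factor hIle
    have hq : ∀ y, q (Submodule.Quotient.mk y) = Submodule.Quotient.mk y := fun y => rfl
    have hqs : Function.Surjective q := by
      intro y
      obtain ⟨y, rfl⟩ := Submodule.Quotient.mk_surjective _ y
      exact ⟨_, hq y⟩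
    refine PDLT.X₃ (PS K U) (LinearMap.ker q).subtype q (Submodule.subtype_injective _) hqs
      (LinearMap.exact_subtype_ker_map q) (PDLT.mono _ (d := 0) ?_ (Nat.zero_le _)) h0
    refine PDLT.zero_of_smul (PS K U) (∏ w ∈ Uᶜ, X w) ?_ ?_
    · rw [(PS_prime K U).prod_mem_iff]
      rintro ⟨w, hw, hX⟩
      rw [X_mem_PS] at hX
      exact (Finset.mem_compl.mp hw) hX
    · rintro ⟨y, hy⟩
      obtain ⟨y, rfl⟩ := Submodule.Quotient.mk_surjective _ y
      apply Subtype.ext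
      change (∏ w ∈ Uᶜ, X w) • Submodule.Quotient.mk y = (0 : MvPolynomial (Fin n) K ⧸ edgeIdeal K G)
      rw [LinearMap.mem_ker, hq, Submodule.Quotient.mk_eq_zero] at hy
      rw [← Submodule.Quotient.mk_smul, Submodule.Quotient.mk_eq_zero, smul_eq_mul]
      apply mem_edgeIdeal_of_covers
      intro E hE
      by_cases hEU : E ⊆ U
      · obtain ⟨D, hDE, hD⟩ := exists_minCov G E hE
        apply Ideal.mul_mem_left
        apply (PS_mono K).mpr hDE
        by_cases hDC : D = C
        · rw [hDC]; exact hy.1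
        · exact (hb y).mp hy.2 D ((h𝓓 D).mpr ⟨hD, hDE.trans hEU, hDC⟩)
      · obtain ⟨w, hwE, hwU⟩ := Finset.not_subset.mp hEU
        exact Ideal.mul_mem_right _ _ (Ideal.prod_mem _ (Finset.mem_compl.mpr hwU) ((X_mem_PS K).mpr hwE))
  -- depth of the middle term
  have hmid : PDLT (PS K U) ((MvPolynomial (Fin n) K ⧸ PS K C) × (MvPolynomial (Fin n) K ⧸ b)) U.card := by
    have hmem : (∑ w ∈ U, X w : MvPolynomial (Fin n) K) ∈ PS K U :=
      Ideal.sum_mem _ fun w hw => (X_mem_PS K).mpr hw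
    rw [← PDLT.quot_iff (PS K U) _ hmem]
    · exact PDLT_gl K U _
    · have hr1 : IsSMulRegular (MvPolynomial (Fin n) K ⧸ PS K C) (∑ w ∈ U, X w : MvPolynomial (Fin n) K) :=
        regular_of_not_mem _ (sum_not_mem K hCU (hproper C hC hCU))
      have hr2 : IsSMulRegular (MvPolynomial (Fin n) K ⧸ b) (∑ w ∈ U, X w : MvPolynomial (Fin n) K) := by
        rw [isSMulRegular_quotient_iff_mem_of_smul_mem]
        intro y hy
        rw [hb] at hy ⊢
        intro D hD
        obtain ⟨hDm, hDU, hDC⟩ := (h𝓓 D).mp hD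
        exact ((PS_prime K D).mem_or_mem (hy D hD)).resolve_left (sum_not_mem K hDU (hproper D hDm hDU))
      rintro ⟨x1, y1⟩ ⟨x2, y2⟩ h
      have h' := Prod.mk.injEq .. ▸ h
      exact Prod.ext (hr1 h'.1) (hr2 h'.2)
  have hUcard : U.card ≤ coverNumber G + 1 := by
    by_contra hlt
    obtain ⟨N, hN⟩ : ∃ N, U.card = N + 1 := ⟨U.card - 1, by omega⟩
    have h1 := PDLT.mv (PS K U) _ _ _ hsup (PDLT.mono _ hloc (show coverNumber G + 1 ≤ N by omega))
      (hN ▸ hmid)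
    have h2 := (PDLT_PS K (Finset.Subset.refl U)).mp h1
    omega
  have hc1 := coverNumber_le G hC.1
  have hc2 := coverNumber_le G hC'.1
  have hlt1 := Finset.card_lt_card (Finset.ssubset_iff_subset_ne.mpr ⟨hCU, hproper C hC hCU⟩)
  have hlt2 := Finset.card_lt_card (Finset.ssubset_iff_subset_ne.mpr ⟨hCU', hproper C' hC' hCU'⟩)
  have hAcard := Finset.card_union_add_card_inter C C'
  rw [← hU] at hAcard
  have hA : (C ∩ C').card + 1 = coverNumber G := by omega
  have hnc : ¬ Cov G (C ∩ C') := fun h => by have := coverNumber_le G h; omega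
  unfold Cov at hnc
  push Not at hnc
  obtain ⟨x, y, hxy, hx, hy⟩ := hnc
  have hfill : ∀ E : Finset (Fin n), E.card = coverNumber G → C ∩ C' ⊆ E → ∀ w ∈ E, w ∉ C ∩ C' →
      insert w (C ∩ C') = E := by
    intro E hE hsub w hw hw'
    apply Finset.eq_of_subset_of_card_le
    · exact Finset.insert_subset hw hsub
    · rw [Finset.card_insert_of_notMem hw']; omega
  have key : ∀ x y, G.Adj x y → x ∉ C ∩ C' → y ∉ C ∩ C' → x ∈ C →
      Cov G (insert x (C ∩ C')) ∧ Cov G (insert y (C ∩ C')) := by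
    intro x y hxy hx hy hxC
    have hxC' : x ∉ C' := fun h => hx (Finset.mem_inter.mpr ⟨hxC, h⟩)
    have hyC' : y ∈ C' := (hC'.1 hxy).resolve_left hxC'
    rw [hfill C (by omega) Finset.inter_subset_left x hxC hx,
      hfill C' (by omega) Finset.inter_subset_right y hyC' hy]
    exact ⟨hC.1, hC'.1⟩
  rcases hC.1 hxy with h | h
  · exact ⟨C ∩ C', x, y, hA, hx, hy, hxy, key x y hxy hx hy h⟩
  · exact ⟨C ∩ C', y, x, hA, hy, hx, hxy.symm, key y x hxy.symm hy hx h⟩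

end Conn

/-- `R/I(G)` is Cohen–Macaulay (depth equals Krull dimension) if and only if
`v(J(G)) = pd(R/I(G)) - 1 = α₀(G) - 1`. -/
theorem cohenMacaulay_iff_vNumber_coverIdeal
    {K : Type} [Field K] {n : ℕ} (hn : 1 ≤ n) (G : SimpleGraph (Fin n))
    (hE : G.edgeSet.Nonempty) :
    ((mdepth (maxIdeal K (Fin n))
        (MvPolynomial (Fin n) K ⧸ edgeIdeal K G) : ℕ) : WithBot (WithTop ℕ)) =
      ringKrullDim (MvPolynomial (Fin n) K ⧸ edgeIdeal K G) ↔
    (vNumber (coverIdeal K G) =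
        projDim (MvPolynomial (Fin n) K)
          (ModuleCat.of (MvPolynomial (Fin n) K)
            (MvPolynomial (Fin n) K ⧸ edgeIdeal K G)) - 1 ∧
      projDim (MvPolynomial (Fin n) K)
          (ModuleCat.of (MvPolynomial (Fin n) K)
            (MvPolynomial (Fin n) K ⧸ edgeIdeal K G)) - 1 =
        coverNumber G - 1) := by
  obtain ⟨e, he⟩ := hE
  induction e using Sym2.ind with
  | _ u v =>
  have huv : G.Adj u v := he
  obtain ⟨hdn, hpd, hlt⟩ := pd_main K G huv
  rw [hpd, dim_edgeIdeal]
  have hαpos : 1 ≤ coverNumber G := by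
    obtain ⟨C, hC, hk⟩ := exists_coverNumber G
    rw [← hk, Nat.one_le_iff_ne_zero, Finset.card_ne_zero]
    rcases hC huv with h | h
    · exact ⟨u, h⟩
    · exact ⟨v, h⟩
  have hαn : coverNumber G ≤ n := by
    have := coverNumber_le G (C := Finset.univ) (fun a b _ => Or.inl (Finset.mem_univ a))
    simpa using this
  have hcast : (((mdepth (maxIdeal K (Fin n)) (MvPolynomial (Fin n) K ⧸ edgeIdeal K G) : ℕ) : WithBot (WithTop ℕ)) =
      ((n - coverNumber G : ℕ) : WithBot ℕ∞)) ↔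
      mdepth (maxIdeal K (Fin n)) (MvPolynomial (Fin n) K ⧸ edgeIdeal K G) = n - coverNumber G := by
    constructor
    · intro h
      have h' : ((mdepth (maxIdeal K (Fin n)) (MvPolynomial (Fin n) K ⧸ edgeIdeal K G) : ℕ) : WithBot ℕ∞) =
        ((n - coverNumber G : ℕ) : WithBot ℕ∞) := h
      exact_mod_cast h'
    · intro h; rw [h]; rfl
  rw [hcast]
  constructor
  · intro h
    have heq : n - mdepth (maxIdeal K (Fin n)) (MvPolynomial (Fin n) K ⧸ edgeIdeal K G) = coverNumber G := by
      omega
    rw [heq] at hlt ⊢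
    refine ⟨?_, rfl⟩
    obtain ⟨A, x, y, hA, hx, hy, hxy, h1, h2⟩ := exists_A K G huv hlt
    obtain ⟨f, hf, hp⟩ := vNumber_mem K G hx hy hxy h1 h2
    have hAc : A.card = coverNumber G - 1 := by omega
    rw [hAc] at hf
    unfold vNumber
    apply le_antisymm
    · exact Nat.sInf_le ⟨f, hf, hp⟩
    · refine le_csInf ⟨_, f, hf, hp⟩ ?_
      rintro d ⟨f', hf', hp'⟩
      exact vNumber_ge K G hf' hp'
  · rintro ⟨-, h⟩
    omega

end
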